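/- arXiv:1708.00704 — 7 statements merged into one kernel-verified Lean document; each statement's English description precedes it below -/
import Mathlib

section
/- Let G be a graph on n vertices and let u, v be two nonadjacent vertices of G with deg(u) + deg(v) ≥ n+1. Then for any two vertices x, y of G, the maximum length of an (x,y)-path in G + uv equals the maximum length of an (x,y)-path in G. Consequently, for any x, y, the longest (x,y)-path in the (n+1)-closure of G has the same length as the longest (x,y)-path in G. -/
open SimpleGraph

/-- Degree of a vertex, as the cardinality of its neighbour set. -/
noncomputable def degN {V : Type*} (G : SimpleGraph V) (u : V) : ℕ := (G.neighborSet u).ncard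

/-- One step of the `k`-closure operation: join a nonadjacent pair with degree sum `≥ k`. -/
def KStep {V : Type*} (k : ℕ) (G G' : SimpleGraph V) : Prop :=
  ∃ u v, u ≠ v ∧ ¬ G.Adj u v ∧ k ≤ degN G u + degN G v ∧
    G' = G ⊔ SimpleGraph.fromEdgeSet {s(u, v)}

/-- `H` is the `k`-closure of `G`: it is obtained from `G` by recursively joining
nonadjacent pairs with degree sum at least `k`, until no such pair remains. -/
def IsKClosure {V : Type*} (k : ℕ) (G H : SimpleGraph V) : Prop :=
  Relation.ReflTransGen (KStep k) G H ∧
    ∀ u v, u ≠ v → ¬ H.Adj u v → degN H u + degN H v < k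

/-- The maximum length of an `(x,y)`-path in `G` (as a supremum in `ℕ`). -/
noncomputable def maxPathLen {V : Type*} (G : SimpleGraph V) (x y : V) : ℕ :=
  sSup {l | ∃ p : G.Walk x y, p.IsPath ∧ p.length = l}

/-!
A path of `G + uv` through the new edge consists of a path `p` from `x` to `u` and a path `q` from
`v` to `y`, disjoint and both in `G`. Suppose that `G` has no `(x,y)`-path of at least the same
length. Then `u` and `v` have no common neighbour off `p` and `q`, since it could be inserted
between them. Nor is there an edge `ab` traversed from `a` to `b` by `p` or `q` with `u ~ a` and
`v ~ b`: a Pósa rotation would join `p` and `q` into a path of `G` on the same vertices. Shifting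
the neighbours of `u` one step forward along `p` and `q` therefore makes them disjoint from the
neighbours of `v` (at the ends one uses `u ≁ u` and `v ≁ v`), whence `deg u + deg v ≤ n`.
-/

theorem countP_add_countP_le_length {α : Type*} {l : List α} {P Q : α → Prop} [DecidablePred P]
    [DecidablePred Q] (h : ∀ a ∈ l, ¬(P a ∧ Q a)) : l.countP P + l.countP Q ≤ l.length := by
  rw [List.length_eq_countP_add_countP (fun a => decide (P a))]
  gcongr
  refine List.countP_mono_left fun a ha hQ => ?_
  simpa using fun hP => h a ha ⟨hP, of_decide_eq_true hQ⟩

theorem exists_nodup_append_forall_mem {α : Type*} [Finite α] {l : List α} (hl : l.Nodup) :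
    ∃ l' : List α, (l ++ l').Nodup ∧ ∀ a, a ∈ l ++ l' := by
  classical
  have := Fintype.ofFinite α
  refine ⟨l.toFinsetᶜ.toList, hl.append (Finset.nodup_toList _) fun a ha => by simp [ha], ?_⟩
  simp [em]

section Paths

variable {V : Type*} {G : SimpleGraph V} {u v x y : V}

theorem countP_support_add_countP_support_le {P Q : V → Prop} [DecidablePred P] [DecidablePred Q]
    (p : G.Walk x y) (h : ∀ d ∈ p.darts, ¬(P d.fst ∧ Q d.snd)) :
    p.support.countP P + p.support.countP Q ≤
      p.length + (if P y then 1 else 0) + (if Q x then 1 else 0) := by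
  have hdarts : p.darts.countP (P ·.fst) + p.darts.countP (Q ·.snd) ≤ p.length :=
    p.length_darts ▸ countP_add_countP_le_length h
  have hfst : p.support.countP P = p.darts.countP (P ·.fst) + if P y then 1 else 0 := by
    simp [← p.map_fst_darts_append, List.countP_map, Function.comp_def]
  have hsnd : p.support.countP Q = p.darts.countP (Q ·.snd) + if Q x then 1 else 0 := by
    simp [← p.cons_map_snd_darts, List.countP_cons, List.countP_map, Function.comp_def]
  omega

theorem degN_eq_countP {l : List V} (hl : l.Nodup) (hmem : ∀ w, w ∈ l) (u : V)
    [DecidablePred (G.Adj u)] : degN G u = l.countP (G.Adj u) := by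
  classical
  have hcoe : G.neighborSet u = ((l.filter (G.Adj u)).toFinset : Set V) := by
    ext w
    simp [hmem]
  rw [degN, hcoe, Set.ncard_coe_finset, List.toFinset_card_of_nodup (hl.filter _),
    List.countP_eq_length_filter]

theorem degN_add_degN_le_card [Fintype V] {p : G.Walk x u} {q : G.Walk v y}
    (hpq : (p.support ++ q.support).Nodup)
    (hp : ∀ d ∈ p.darts, ¬(G.Adj u d.fst ∧ G.Adj v d.snd))
    (hq : ∀ d ∈ q.darts, ¬(G.Adj u d.fst ∧ G.Adj v d.snd))
    (hout : ∀ w ∉ p.support ++ q.support, ¬(G.Adj u w ∧ G.Adj v w)) :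
    degN G u + degN G v ≤ Fintype.card V := by
  classical
  obtain ⟨l, hnodup, hmem⟩ := exists_nodup_append_forall_mem hpq
  have hcard : Fintype.card V = (p.support ++ q.support ++ l).length := by
    rw [← List.toFinset_card_of_nodup hnodup,
      Finset.eq_univ_iff_forall.mpr fun w => List.mem_toFinset.mpr (hmem w), Finset.card_univ]
  have hcount_p : p.support.countP (G.Adj u) + p.support.countP (G.Adj v) ≤ p.length + 1 := by
    have := countP_support_add_countP_support_le p hp
    rw [if_neg G.irrefl] at this
    split_ifs at this <;> omega
  have hcount_q : q.support.countP (G.Adj u) + q.support.countP (G.Adj v) ≤ q.length + 1 := by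
    have := countP_support_add_countP_support_le q hq
    rw [if_neg (G.irrefl (v := v))] at this
    split_ifs at this <;> omega
  have hcount_l : l.countP (G.Adj u) + l.countP (G.Adj v) ≤ l.length :=
    countP_add_countP_le_length fun w hw => hout w (hnodup.disjoint.symm hw)
  simp only [hcard, degN_eq_countP hnodup hmem, List.countP_append, List.length_append,
    Walk.length_support]
  omega

theorem exists_eq_append_cons_of_mem_darts {p : G.Walk x y} {d : G.Dart} (hd : d ∈ p.darts) :
    ∃ (q : G.Walk x d.fst) (r : G.Walk d.snd y), p = q.append (.cons d.adj r) := by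
  obtain ⟨q, r, rfl⟩ := (Walk.isSubwalk_toWalk_adj_iff_mem_darts p).mpr hd
  exact ⟨q, r, (Walk.append_assoc q d.adj.toWalk r).symm⟩

theorem support_append_cons (p : G.Walk x u) (h : G.Adj u v) (q : G.Walk v y) :
    (p.append (.cons h q)).support = p.support ++ q.support := by
  simp [Walk.support_append]

/-- A Pósa rotation: the part of `p` after `d` is reversed and reattached at `d.fst`. -/
theorem exists_support_perm_of_adj_dart_fst {p : G.Walk x u} {d : G.Dart} (hd : d ∈ p.darts)
    (hu : G.Adj u d.fst) : ∃ p' : G.Walk x d.snd, p'.support.Perm p.support := by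
  obtain ⟨q, r, rfl⟩ := exists_eq_append_cons_of_mem_darts hd
  refine ⟨q.append (.cons hu.symm r.reverse), ?_⟩
  simp only [support_append_cons, Walk.support_reverse]
  exact r.support.reverse_perm.append_left _

theorem exists_support_perm_append_of_mem_darts_left {p : G.Walk x u} (q : G.Walk v y)
    {d : G.Dart} (hd : d ∈ p.darts) (hu : G.Adj u d.fst) (hv : G.Adj v d.snd) :
    ∃ r : G.Walk x y, r.support.Perm (p.support ++ q.support) := by
  obtain ⟨p', hp'⟩ := exists_support_perm_of_adj_dart_fst hd hu
  exact ⟨p'.append (.cons hv.symm q), support_append_cons p' _ q ▸ hp'.append_right _⟩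

theorem exists_support_perm_append_of_mem_darts_right (p : G.Walk x u) {q : G.Walk v y}
    {d : G.Dart} (hd : d ∈ q.darts) (hu : G.Adj u d.fst) (hv : G.Adj v d.snd) :
    ∃ r : G.Walk x y, r.support.Perm (p.support ++ q.support) := by
  obtain ⟨r, hr⟩ := exists_support_perm_append_of_mem_darts_left p.reverse
    (Walk.mem_darts_reverse.mpr (by simpa using hd) : d.symm ∈ q.reverse.darts) hv hu
  refine ⟨r.reverse, ?_⟩
  rw [Walk.support_reverse]
  refine r.support.reverse_perm.trans (hr.trans ?_)
  simpa using (p.support ++ q.support).reverse_perm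

theorem exists_isPath_length_add_length_lt [Fintype V] {p : G.Walk x u} {q : G.Walk v y}
    (hpq : (p.support ++ q.support).Nodup) (hdeg : Fintype.card V < degN G u + degN G v) :
    ∃ r : G.Walk x y, r.IsPath ∧ p.length + q.length < r.length := by
  by_contra! hshort
  have hperm (r : G.Walk x y) : ¬ r.support.Perm (p.support ++ q.support) := fun hr => by
    have hlen := hr.length_eq
    simp only [List.length_append, Walk.length_support] at hlen
    have := hshort r (.mk' (hr.nodup_iff.mpr hpq))
    omega
  refine hdeg.not_ge (degN_add_degN_le_card hpq ?_ ?_ ?_)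
  · rintro d hd ⟨hu, hv⟩
    obtain ⟨r, hr⟩ := exists_support_perm_append_of_mem_darts_left q hd hu hv
    exact hperm r hr
  · rintro d hd ⟨hu, hv⟩
    obtain ⟨r, hr⟩ := exists_support_perm_append_of_mem_darts_right p hd hu hv
    exact hperm r hr
  · rintro w hw ⟨hu, hv⟩
    have hpath : (p.append (.cons hu (.cons hv.symm q))).IsPath := by
      rw [Walk.isPath_def, support_append_cons, Walk.support_cons, List.nodup_middle]
      exact hpq.cons hw
    have := hshort _ hpath
    simp only [Walk.length_append, Walk.length_cons] at this
    omega

theorem edges_subset_edgeSet_of_sup_fromEdgeSet {e : Sym2 V} {p : (G ⊔ fromEdgeSet {e}).Walk x y}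
    (he : e ∉ p.edges) : ∀ f ∈ p.edges, f ∈ G.edgeSet := fun f hf => by
  have hfe : f ≠ e := ne_of_mem_of_not_mem hf he
  simpa [hfe] using p.edges_subset_edgeSet hf

theorem exists_support_append_eq_of_mem_edges {e : Sym2 V} {p : (G ⊔ fromEdgeSet {e}).Walk x y}
    (hp : p.IsTrail) (he : e ∈ p.edges) :
    ∃ (a b : V) (q : G.Walk x a) (r : G.Walk b y),
      s(a, b) = e ∧ q.support ++ r.support = p.support := by
  obtain ⟨d, hd, hde⟩ := List.mem_map.mp he
  obtain ⟨q, r, rfl⟩ := exists_eq_append_cons_of_mem_darts hd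
  have hnodup := hp.edges_nodup
  rw [Walk.edges_append, Walk.edges_cons, show s(d.fst, d.snd) = e from hde] at hnodup
  have hnotMem : e ∉ q.edges ++ r.edges := (List.nodup_middle.mp hnodup).notMem
  have hq := edges_subset_edgeSet_of_sup_fromEdgeSet (mt (List.mem_append_left _) hnotMem)
  have hr := edges_subset_edgeSet_of_sup_fromEdgeSet (mt (List.mem_append_right _) hnotMem)
  refine ⟨d.fst, d.snd, q.transfer G hq, r.transfer G hr, hde, ?_⟩
  rw [Walk.support_transfer, Walk.support_transfer, support_append_cons]

theorem exists_isPath_length_le_of_sup_fromEdgeSet [Fintype V]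
    (hdeg : Fintype.card V < degN G u + degN G v)
    {p : (G ⊔ fromEdgeSet {s(u, v)}).Walk x y} (hp : p.IsPath) :
    ∃ q : G.Walk x y, q.IsPath ∧ p.length ≤ q.length := by
  by_cases huv : s(u, v) ∈ p.edges
  · obtain ⟨a, b, q, r, hab, hqr⟩ := exists_support_append_eq_of_mem_edges hp.isTrail huv
    have hdeg_ab : Fintype.card V < degN G a + degN G b := by
      rcases Sym2.eq_iff.mp hab with ⟨rfl, rfl⟩ | ⟨rfl, rfl⟩ <;> omega
    obtain ⟨p', hp', hlt⟩ :=
      exists_isPath_length_add_length_lt (hqr ▸ hp.support_nodup) hdeg_ab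
    refine ⟨p', hp', ?_⟩
    have hlength := congrArg List.length hqr
    simp only [List.length_append, Walk.length_support] at hlength
    omega
  · have hG := edges_subset_edgeSet_of_sup_fromEdgeSet huv
    exact ⟨p.transfer G hG, hp.transfer hG, (p.length_transfer hG).ge⟩

theorem maxPathLen_le_maxPathLen {W : Type*} [Finite W] {G' : SimpleGraph W} {x' y' : W}
    (h : ∀ p : G.Walk x y, p.IsPath → ∃ q : G'.Walk x' y', q.IsPath ∧ p.length ≤ q.length) :
    maxPathLen G x y ≤ maxPathLen G' x' y' := by
  have := Fintype.ofFinite W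
  have hbdd : BddAbove {l | ∃ q : G'.Walk x' y', q.IsPath ∧ q.length = l} := by
    refine ⟨Fintype.card W, ?_⟩
    rintro _ ⟨q, hq, rfl⟩
    exact hq.length_lt.le
  refine csSup_le' ?_
  rintro _ ⟨p, hp, rfl⟩
  obtain ⟨q, hq, hpq⟩ := h p hp
  exact hpq.trans (le_csSup hbdd ⟨q, hq, rfl⟩)

theorem maxPathLen_sup_fromEdgeSet [Fintype V] (hdeg : Fintype.card V < degN G u + degN G v)
    (x y : V) : maxPathLen (G ⊔ fromEdgeSet {s(u, v)}) x y = maxPathLen G x y :=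
  le_antisymm
    (maxPathLen_le_maxPathLen fun _ hp => exists_isPath_length_le_of_sup_fromEdgeSet hdeg hp)
    (maxPathLen_le_maxPathLen fun p hp => ⟨p.mapLe le_sup_left, hp.mapLe le_sup_left, by simp⟩)

theorem maxPathLen_eq_of_reflTransGen_kStep [Fintype V] {k : ℕ} (hk : Fintype.card V < k)
    {H : SimpleGraph V} (hGH : Relation.ReflTransGen (KStep k) G H) (x y : V) :
    maxPathLen H x y = maxPathLen G x y := by
  induction hGH with
  | refl => rfl
  | tail _ hstep ih =>
    obtain ⟨u, v, -, -, hdeg, rfl⟩ := hstep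
    exact (maxPathLen_sup_fromEdgeSet (hk.trans_le hdeg) x y).trans ih

end Paths

/-- If `u, v` are nonadjacent with `deg u + deg v ≥ n+1`, then adding the edge `uv` does not
change the maximum length of an `(x,y)`-path, for any `x, y`; consequently the longest
`(x,y)`-path in the `(n+1)`-closure of `G` has the same length as in `G`. -/
theorem stmt4 {V : Type*} [Fintype V] (G : SimpleGraph V) (n : ℕ)
    (hn : Fintype.card V = n) (u v : V) (huv : u ≠ v) (hadj : ¬ G.Adj u v)
    (hdeg : n + 1 ≤ degN G u + degN G v) :
    (∀ x y : V, maxPathLen (G ⊔ SimpleGraph.fromEdgeSet {s(u, v)}) x y = maxPathLen G x y) ∧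
    (∀ H : SimpleGraph V, IsKClosure (n + 1) G H →
      ∀ x y : V, maxPathLen H x y = maxPathLen G x y) := by
  subst hn
  exact ⟨maxPathLen_sup_fromEdgeSet hdeg,
    fun _ hH => maxPathLen_eq_of_reflTransGen_kStep (Nat.lt_succ_self _) hH.1⟩
end

section
/- Let G be a non-Hamiltonian-connected graph on n vertices with minimum degree at least 2. Then there exists an integer s with 2 ≤ s ≤ ⌊n/2⌋ and a set of s-1 vertices of G each of degree at most s. -/
open SimpleGraph

/-- A graph is Hamiltonian-connected if every two distinct vertices are joined by a
Hamiltonian path (a path visiting every vertex exactly once). -/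
def HamConn {V : Type*} [DecidableEq V] (G : SimpleGraph V) : Prop :=
  ∀ x y : V, x ≠ y → ∃ p : G.Walk x y, p.IsHamiltonian

/-!
Fix distinct `x`, `y` not joined by a Hamiltonian path of `G`, and enlarge `G` to an edge-maximal
graph `H` with this property. `H` is not complete, and any distinct nonadjacent `u`, `v` satisfy
`deg u + deg v ≤ n` in `H`: adding the edge `uv` creates a Hamiltonian `(x, y)`-path, and if the
degree sum exceeded `n`, reversing a segment of that path would remove `uv` from it again, as in the
theorems of Ore and of Bondy and Chvátal. Choose such `u`, `v` with `deg u + deg v` maximal and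
`deg u ≤ deg v`. Then `deg u ≤ n / 2`, and by maximality each of the `n - 1 - deg v ≥ deg u - 1`
non-neighbours of `v` has degree at most `deg u` in `H`, hence in `G`. So `s = deg u` works.
-/

section

variable {V : Type*} {G : SimpleGraph V}

theorem degN_le_degree_of_le {H : SimpleGraph V} {v : V} [Fintype (H.neighborSet v)] (hGH : G ≤ H) :
    degN G v ≤ H.degree v := by
  rw [← card_neighborFinset_eq_degree, ← Set.ncard_coe_finset, coe_neighborFinset]
  exact Set.ncard_le_ncard (fun w hw => hGH hw) (Set.toFinite _)

theorem exists_mem_and_of_length_lt_countP_add_countP {α : Type*} {l : List α} {P Q : α → Prop}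
    [DecidablePred P] [DecidablePred Q]
    (h : l.length < l.countP (fun a => P a) + l.countP (fun a => Q a)) : ∃ a ∈ l, P a ∧ Q a := by
  by_contra! hPQ
  have hle : l.countP (fun a => P a) ≤ l.countP (fun a => ¬ Q a) :=
    List.countP_mono_left (by simpa using hPQ)
  have hlen : l.length = l.countP (fun a => Q a) + l.countP (fun a => ¬ Q a) := by
    simpa using l.length_eq_countP_add_countP (fun a => Q a)
  lia

theorem countP_adj_eq_degree_of_count_eq_one [Fintype V] [DecidableEq V] [DecidableRel G.Adj]
    {l : List V} (hl : ∀ w, l.count w = 1) (u : V) :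
    l.countP (fun w => G.Adj u w) = G.degree u := by
  have hnodup : l.Nodup := List.nodup_iff_count_eq_one.2 fun w _ => hl w
  have huniv : l.toFinset = Finset.univ :=
    Finset.eq_univ_of_forall fun w => by simp [← List.count_pos_iff, hl]
  rw [← hnodup.card_eq_countP, huniv, ← neighborFinset_eq_filter, card_neighborFinset_eq_degree]

theorem exists_support_eq_append_of_mem_darts {x y : V} {p : G.Walk x y} {d : G.Dart}
    (hd : d ∈ p.darts) :
    ∃ (q : G.Walk x d.fst) (r : G.Walk d.snd y), p.support = q.support ++ r.support := by
  obtain ⟨q, r, rfl⟩ := (Walk.isSubwalk_toWalk_adj_iff_mem_darts p).2 hd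
  exact ⟨q, r, by simp [Walk.support_append]⟩

theorem exists_support_eq_of_notMem_edges_sup_edge {u v x y : V} {p : (G ⊔ edge u v).Walk x y}
    (h : s(u, v) ∉ p.edges) : ∃ q : G.Walk x y, q.support = p.support := by
  refine ⟨p.transfer G fun e he => ?_, p.support_transfer _⟩
  have hne : e ≠ s(u, v) := ne_of_mem_of_not_mem he h
  simpa [hne] using p.edges_subset_edgeSet he

theorem exists_isHamiltonian_top_of_ne [Finite V] [DecidableEq V] {x y : V} (hxy : x ≠ y) :
    ∃ p : (⊤ : SimpleGraph V).Walk x y, p.IsHamiltonian := by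
  have := Fintype.ofFinite V
  let l := x :: (({x, y}ᶜ : Finset V).toList ++ [y])
  have hnodup : l.Nodup := by simp [l, List.nodup_append, Finset.nodup_toList, hxy]
  have hmem : ∀ w, w ∈ l := by grind [Finset.mem_toList, Finset.mem_compl]
  have hchain : l.IsChain (⊤ : SimpleGraph V).Adj := List.Pairwise.isChain hnodup
  have hne : l ≠ [] := List.cons_ne_nil _ _
  have hhead : l.head hne = x := rfl
  have hlast : l.getLast hne = y := by simp [l]
  refine ⟨(Walk.ofSupport l hne hchain).copy hhead hlast, fun w => ?_⟩
  rw [Walk.support_copy, Walk.support_ofSupport]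
  exact List.count_eq_one_of_mem hnodup (hmem w)

theorem exists_isHamiltonian_of_reverse_middle [DecidableEq V] {x a b c d y : V} {p : G.Walk x a}
    {q : G.Walk b c} {r : G.Walk d y}
    (h : ∀ w, (p.support ++ q.support ++ r.support).count w = 1) (hac : G.Adj a c)
    (hbd : G.Adj b d) : ∃ s : G.Walk x y, s.IsHamiltonian :=
  ⟨p.append (.cons hac (q.reverse.append (.cons hbd r))), fun w => by
    simpa [Walk.support_append, add_assoc] using h w⟩

variable [Fintype V]

theorem exists_mem_darts_adj_fst_adj_snd [DecidableEq V] [DecidableRel G.Adj] {x u v y : V}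
    {p : G.Walk x u} {q : G.Walk v y} (h : ∀ w, (p.support ++ q.support).count w = 1)
    (hdeg : Fintype.card V < G.degree u + G.degree v) :
    ∃ d ∈ p.darts ++ q.darts, G.Adj u d.fst ∧ G.Adj v d.snd := by
  apply exists_mem_and_of_length_lt_countP_add_countP
  -- Every vertex but `u` and `y` starts exactly one of these darts, and `u` is not adjacent to
  -- itself; dually, every vertex but `x` and `v` ends exactly one.
  have hu : G.degree u ≤ (p.darts ++ q.darts).countP (fun d => G.Adj u d.fst) + 1 := by
    rw [← countP_adj_eq_degree_of_count_eq_one h, ← p.map_fst_darts_append,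
      ← q.map_fst_darts_append]
    simp only [List.countP_append, List.countP_map, List.countP_singleton, Function.comp_def,
      decide_eq_true_eq, G.irrefl, if_false]
    split_ifs <;> lia
  have hv : G.degree v ≤ (p.darts ++ q.darts).countP (fun d => G.Adj v d.snd) + 1 := by
    rw [← countP_adj_eq_degree_of_count_eq_one h, ← p.cons_map_snd_darts, ← q.cons_map_snd_darts]
    simp only [List.countP_append, List.countP_map, List.countP_cons, Function.comp_def,
      decide_eq_true_eq, G.irrefl, if_false]
    split_ifs <;> lia
  have hlen : (p.darts ++ q.darts).length + 2 = Fintype.card V := by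
    have hcard := Fintype.card_congr (List.getEquivOfForallCountEqOne _ h)
    simp only [Fintype.card_fin, List.length_append, Walk.length_support, Walk.length_darts]
      at hcard ⊢
    lia
  lia

theorem exists_isHamiltonian_of_card_lt_degree_add_degree [DecidableEq V] [DecidableRel G.Adj]
    {x u v y : V} {p : G.Walk x u} {q : G.Walk v y}
    (h : ∀ w, (p.support ++ q.support).count w = 1)
    (hdeg : Fintype.card V < G.degree u + G.degree v) : ∃ s : G.Walk x y, s.IsHamiltonian := by
  obtain ⟨d, hd, hud, hvd⟩ := exists_mem_darts_adj_fst_adj_snd h hdeg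
  obtain hd | hd := List.mem_append.1 hd
  · obtain ⟨p₁, p₂, hp⟩ := exists_support_eq_append_of_mem_darts hd
    exact exists_isHamiltonian_of_reverse_middle (by rwa [hp] at h) hud.symm hvd.symm
  · obtain ⟨q₁, q₂, hq⟩ := exists_support_eq_append_of_mem_darts hd
    exact exists_isHamiltonian_of_reverse_middle (by rwa [hq, ← List.append_assoc] at h) hud hvd

theorem exists_isHamiltonian_of_sup_edge [DecidableEq V] [DecidableRel G.Adj] {u v x y : V}
    {p : (G ⊔ edge u v).Walk x y} (hp : p.IsHamiltonian)
    (hdeg : Fintype.card V < G.degree u + G.degree v) : ∃ q : G.Walk x y, q.IsHamiltonian := by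
  by_cases huv : s(u, v) ∈ p.edges
  · obtain ⟨d, hd, hduv⟩ := List.mem_map.1 huv
    obtain ⟨q, r, hqr⟩ := exists_support_eq_append_of_mem_darts hd
    have hdisj : q.support.Disjoint r.support :=
      List.disjoint_of_nodup_append (hqr ▸ hp.isPath.support_nodup)
    obtain ⟨q', hq'⟩ := exists_support_eq_of_notMem_edges_sup_edge (p := q) fun h =>
      hdisj (q.snd_mem_support_of_mem_edges (hduv ▸ h)) r.start_mem_support
    obtain ⟨r', hr'⟩ := exists_support_eq_of_notMem_edges_sup_edge (p := r) fun h =>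
      hdisj q.end_mem_support (r.fst_mem_support_of_mem_edges (hduv ▸ h))
    refine exists_isHamiltonian_of_card_lt_degree_add_degree (p := q') (q := r')
      (by rwa [hq', hr', ← hqr]) ?_
    obtain ⟨hu, hv⟩ | ⟨hu, hv⟩ := Sym2.eq_iff.1 hduv <;> rw [hu, hv] <;> lia
  · obtain ⟨q, hq⟩ := exists_support_eq_of_notMem_edges_sup_edge huv
    exact ⟨q, by rwa [Walk.IsHamiltonian, hq]⟩

theorem exists_compl_adj_forall_degree_le [DecidableRel G.Adj] (hG : G ≠ ⊤) :
    ∃ u v, Gᶜ.Adj u v ∧ G.degree u ≤ G.degree v ∧ ∀ w, Gᶜ.Adj w v → G.degree w ≤ G.degree u := by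
  have hne : {e : V × V | Gᶜ.Adj e.1 e.2}.Nonempty := by
    obtain ⟨a, b, hab, h⟩ := G.ne_top_iff_exists_not_adj.1 hG
    exact ⟨(a, b), hab, h⟩
  obtain ⟨⟨u, v⟩, (huv : Gᶜ.Adj u v), hmax⟩ :=
    Set.exists_max_image _ (fun e => G.degree e.1 + G.degree e.2) (Set.toFinite _) hne
  wlog hle : G.degree u ≤ G.degree v generalizing u v
  · exact this v u huv.symm (fun e he => (hmax e he).trans_eq (add_comm _ _)) (by lia)
  exact ⟨u, v, huv, hle, fun w hw => Nat.le_of_add_le_add_right (hmax (w, v) hw)⟩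

theorem exists_card_eq_forall_degree_le [DecidableRel G.Adj] (hG : G ≠ ⊤)
    (hdeg : ∀ u v, Gᶜ.Adj u v → G.degree u + G.degree v ≤ Fintype.card V) :
    ∃ u, G.degree u ≤ Fintype.card V / 2 ∧
      ∃ S : Finset V, S.card = G.degree u - 1 ∧ ∀ w ∈ S, G.degree w ≤ G.degree u := by
  classical
  obtain ⟨u, v, huv, hle, hmax⟩ := exists_compl_adj_forall_degree_le hG
  have hsum := hdeg u v huv
  have hcard : G.degree u - 1 ≤ (Gᶜ.neighborFinset v).card := by
    rw [card_neighborFinset_eq_degree, degree_compl]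
    lia
  obtain ⟨S, hS, hScard⟩ := Finset.exists_subset_card_eq hcard
  exact ⟨u, by lia, S, hScard,
    fun w hw => hmax w ((Gᶜ.mem_neighborFinset v w).1 (hS hw)).symm⟩

end

/-- A non-Hamiltonian-connected graph on `n` vertices with minimum degree at least 2
has, for some `2 ≤ s ≤ ⌊n/2⌋`, a set of `s-1` vertices each of degree at most `s`. -/
theorem stmt5 {V : Type*} [Fintype V] [DecidableEq V] (G : SimpleGraph V) (n : ℕ)
    (hn : Fintype.card V = n) (hmin : ∀ v : V, 2 ≤ degN G v) (hnc : ¬ HamConn G) :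
    ∃ s : ℕ, 2 ≤ s ∧ s ≤ n / 2 ∧
      ∃ S : Finset V, S.card = s - 1 ∧ ∀ v ∈ S, degN G v ≤ s := by
  classical
  subst hn
  obtain ⟨x, y, hxy, hG⟩ : ∃ x y, x ≠ y ∧ ¬ ∃ p : G.Walk x y, p.IsHamiltonian := by
    simpa only [HamConn, not_forall, exists_prop] using hnc
  obtain ⟨H, hGH, hH⟩ := Finite.exists_le_maximal
    (p := fun H : SimpleGraph V => ¬ ∃ p : H.Walk x y, p.IsHamiltonian) hG
  have hle : ∀ v, degN G v ≤ H.degree v := fun _ => degN_le_degree_of_le hGH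
  have hne : H ≠ ⊤ := by
    rintro rfl
    exact hH.prop (exists_isHamiltonian_top_of_ne hxy)
  have hdeg : ∀ u v, Hᶜ.Adj u v → H.degree u + H.degree v ≤ Fintype.card V := by
    rintro u v ⟨huv, hadj⟩
    by_contra! hlt
    refine hH.not_prop_of_gt (lt_sup_edge H u v huv hadj) fun ⟨_, hp⟩ => ?_
    exact hH.prop (exists_isHamiltonian_of_sup_edge hp hlt)
  obtain ⟨u, hu, S, hS, hSdeg⟩ := exists_card_eq_forall_degree_le hne hdeg
  exact ⟨H.degree u, (hmin u).trans (hle u), hu, S, hS, fun v hv => (hle v).trans (hSdeg v hv)⟩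
end

section
/- Let G be a Hamiltonian graph on c ≥ 6 vertices that is (c+1)-closed and non-Hamiltonian-connected with e(G) > h(c+1, ⌊c/2⌋ - 1). If G contains ⌊c/2⌋ - 1 vertices of degree at most ⌊c/2⌋, then G is isomorphic to W_{c, ⌊c/2⌋, c}. -/
open SimpleGraph

/-- `h(n,k) = C(n-k,2) + k(k-1)`. -/
def hN (n k : ℕ) : ℕ := (n - k).choose 2 + k * (k - 1)

/-- `W_{n,k,c}`: the graph obtained from a clique on `{0, …, c-k}` by joining each of the
remaining `n-(c-k+1)` vertices to the same `k` vertices `{0, …, k-1}` of the clique. -/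
def Wgraph (n k c : ℕ) : SimpleGraph (Fin n) :=
  SimpleGraph.fromRel (fun u v =>
    (u.val < c - k + 1 ∧ v.val < c - k + 1) ∨ u.val < k ∨ v.val < k)

/-!
Let `S` be the given set of low-degree vertices, so that every vertex of `S` has degree at most
`|S| + 1`. The bound on the number of edges limits the total defect: `S` spans few edges, `Sᶜ` is
almost a clique, and the degrees in `S` are almost `|S| + 1`. Closedness then makes every vertex of
`Sᶜ` with more neighbours in `S` than non-neighbours in `Sᶜ` universal, and counting the edges
between `S` and `Sᶜ` shows that the set `K` of these vertices has size `|S|` or `|S| + 1`.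

If `|K| = |S| + 1`, the neighbourhood of every vertex of `S` is `K`, and two nonadjacent vertices
outside `S ∪ K` would together with `S` form an independent set too large for a Hamiltonian graph;
so `Sᶜ` is a clique. If `|K| = |S|`, a matching that covers enough of the vertices outside `K`
partitions them into `|S| - 1` cliques, which the vertices of `K` link into a Hamiltonian path
between any two given vertices, contradicting the hypothesis.
-/

section Degrees

variable {V : Type*}

open Classical in
/-- The number of neighbours of `v` in `A`, whether or not `v` belongs to `A`; for `Gᶜ` it
counts the edges missing between `v` and `A`. -/
noncomputable def degIn (G : SimpleGraph V) (A : Finset V) (v : V) : ℕ :=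
  (A.filter fun w => G.Adj v w).card

variable {G : SimpleGraph V} {A B : Finset V} {u v w : V}

lemma degIn_pos_iff : 0 < degIn G A v ↔ ∃ w ∈ A, G.Adj v w := by
  simp [degIn, Finset.card_pos, Finset.filter_nonempty_iff]

lemma degIn_le_card : degIn G A v ≤ A.card := by
  classical exact Finset.card_filter_le _ _

lemma degIn_mono (h : A ⊆ B) : degIn G A v ≤ degIn G B v := by
  classical exact Finset.card_le_card (Finset.filter_subset_filter _ h)

lemma degIn_eq_card_iff : degIn G A v = A.card ↔ ∀ w ∈ A, G.Adj v w := by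
  classical simp [degIn, Finset.card_filter_eq_iff]

lemma eq_of_adj_of_degIn_le_one (h : degIn G A v ≤ 1) (hu : u ∈ A) (hw : w ∈ A)
    (hvu : G.Adj v u) (hvw : G.Adj v w) : u = w :=
  Finset.card_le_one.1 h u (by simp [hu, hvu]) w (by simp [hw, hvw])

lemma degIn_add_degIn_sdiff [DecidableEq V] (h : B ⊆ A) :
    degIn G B v + degIn G (A \ B) v = degIn G A v := by
  simp only [degIn, Finset.card_filter]
  rw [add_comm, Finset.sum_sdiff h]

lemma degIn_sdiff_of_not_adj [DecidableEq V] (h : ∀ w ∈ B, ¬ G.Adj v w) :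
    degIn G (A \ B) v = degIn G A v := by
  unfold degIn
  congr 1
  ext w
  grind

lemma degIn_add_degIn_compl_of_notMem (h : v ∉ A) : degIn G A v + degIn Gᶜ A v = A.card := by
  classical
  rw [degIn, degIn, ← A.card_filter_add_card_filter_not fun w => G.Adj v w]
  congr 2
  ext w
  simp only [Finset.mem_filter, compl_adj, and_congr_right_iff, and_iff_right_iff_imp]
  exact fun hw _ => (ne_of_mem_of_not_mem hw h).symm

lemma degIn_erase_self [DecidableEq V] : degIn G (A.erase v) v = degIn G A v := by
  simp [degIn, Finset.filter_erase]

lemma degIn_add_degIn_compl_of_mem (h : v ∈ A) :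
    degIn G A v + degIn Gᶜ A v + 1 = A.card := by
  classical
  rw [← Finset.card_erase_add_one h,
    ← degIn_add_degIn_compl_of_notMem (G := G) (A.notMem_erase v), degIn_erase_self,
    degIn_erase_self]

lemma sum_degIn_comm (A B : Finset V) : ∑ v ∈ A, degIn G B v = ∑ v ∈ B, degIn G A v := by
  classical
  simp only [degIn, Finset.card_filter]
  rw [Finset.sum_comm]
  simp only [G.adj_comm]

lemma sum_degIn_add_sum_degIn_compl (A : Finset V) :
    ∑ v ∈ A, degIn G A v + ∑ v ∈ A, degIn Gᶜ A v + A.card = A.card * A.card := by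
  rw [← Finset.sum_add_distrib, Finset.card_eq_sum_ones, ← Finset.sum_add_distrib,
    ← Finset.card_eq_sum_ones]
  exact Finset.sum_const_nat fun v hv => degIn_add_degIn_compl_of_mem hv

lemma two_mul_sum_degIn_le (h : B ⊆ A) :
    2 * ∑ v ∈ B, degIn G A v ≤ ∑ v ∈ A, degIn G A v + ∑ v ∈ B, degIn G B v := by
  classical
  have hsplit := Finset.sum_sdiff (f := degIn G A) h
  have hmono : ∑ v ∈ A \ B, degIn G B v ≤ ∑ v ∈ A \ B, degIn G A v :=
    Finset.sum_le_sum fun v _ => degIn_mono h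
  have hB : ∑ v ∈ B, degIn G B v + ∑ v ∈ B, degIn G (A \ B) v = ∑ v ∈ B, degIn G A v := by
    rw [← Finset.sum_add_distrib]
    exact Finset.sum_congr rfl fun v _ => degIn_add_degIn_sdiff h
  rw [sum_degIn_comm B (A \ B)] at hB
  omega

lemma two_mul_degIn_le_sum (hv : v ∈ A) : 2 * degIn G A v ≤ ∑ w ∈ A, degIn G A w := by
  classical
  have h := two_mul_sum_degIn_le (G := G) (Finset.singleton_subset_iff.2 hv)
  simpa [show degIn G {v} v = 0 by simp [degIn, Finset.filter_singleton]] using h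

lemma two_mul_degIn_add_degIn_le_sum (hu : u ∈ A) (hv : v ∈ A) (huv : u ≠ v) :
    2 * (degIn G A u + degIn G A v) ≤ ∑ w ∈ A, degIn G A w + 2 := by
  classical
  have h := two_mul_sum_degIn_le (G := G) (B := {u, v}) (A := A) (by grind)
  have hpair : ∀ w ∈ ({u, v} : Finset V), degIn G {u, v} w ≤ 1 := fun w hw => by
    have := degIn_add_degIn_compl_of_mem (G := G) hw
    rw [Finset.card_pair huv] at this
    omega
  have hsum : ∑ w ∈ {u, v}, degIn G {u, v} w ≤ 2 :=
    (Finset.sum_le_card_nsmul _ _ 1 hpair).trans (by simp [huv])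
  rw [Finset.sum_pair huv] at h
  linarith

variable [Fintype V]

lemma degN_eq_degIn_add_degIn_compl [DecidableEq V] (S : Finset V) (v : V) :
    degN G v = degIn G S v + degIn G Sᶜ v := by
  classical
  rw [Finset.compl_eq_univ_sdiff, degIn_add_degIn_sdiff S.subset_univ, degN, degIn,
    ← Set.ncard_coe_finset]
  congr 1
  ext w
  simp

lemma sum_degN : ∑ v, degN G v = 2 * G.edgeSet.ncard := by
  classical
  rw [← coe_edgeFinset, Set.ncard_coe_finset, ← sum_degrees_eq_twice_card_edges]
  refine Finset.sum_congr rfl fun v _ => ?_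
  rw [degN, ← card_neighborFinset_eq_degree, ← Set.ncard_coe_finset, coe_neighborFinset]

end Degrees

section IndependentSets

variable {V : Type*} [Fintype V] [DecidableEq V] {G : SimpleGraph V} {I : Finset V}

lemma two_mul_card_le_card_of_isIndepSet (hG : G.IsHamiltonian) (hV : Fintype.card V ≠ 1)
    (hI : G.IsIndepSet (I : Set V)) : 2 * I.card ≤ Fintype.card V := by
  obtain ⟨a, p, hp⟩ := hG hV
  let H : SimpleGraph V := p.toSubgraph.spanningCoe
  have hdeg (v : V) : degIn H I v + degIn H Iᶜ v = 2 := by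
    rw [← degN_eq_degIn_add_degIn_compl]
    exact hp.isCycle.ncard_neighborSet_toSubgraph_eq_two (hp.mem_support v)
  have hindep : ∀ v ∈ I, degIn H I v = 0 := fun v hv => by
    by_contra h
    obtain ⟨w, hw, hvw⟩ := degIn_pos_iff.1 (Nat.pos_of_ne_zero h)
    exact hI hv hw hvw.ne (p.toSubgraph.adj_sub hvw)
  have hcross : I.card * 2 ≤ Iᶜ.card * 2 := calc
    I.card * 2 = ∑ v ∈ I, degIn H Iᶜ v :=
      (Finset.sum_const_nat fun v hv => by linarith [hdeg v, hindep v hv]).symm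
    _ = ∑ v ∈ Iᶜ, degIn H I v := sum_degIn_comm I Iᶜ
    _ ≤ Iᶜ.card * 2 := Finset.sum_le_card_nsmul _ _ 2 fun v _ => by linarith [hdeg v]
  have := I.card_add_card_compl
  omega

end IndependentSets

section CliqueCover

variable {V : Type*} [DecidableEq V] {G : SimpleGraph V}

lemma exists_isClique_colorable_compl_sdiff {R : Finset V} {n : ℕ}
    (hR : (Gᶜ.induce (R : Set V)).Colorable (n + 1)) :
    ∃ C ⊆ R, G.IsClique (C : Set V) ∧ (Gᶜ.induce ((R \ C : Finset V) : Set V)).Colorable n := by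
  classical
  obtain ⟨c⟩ := hR
  let C := (R.attach.filter fun v => c v = Fin.last n).map (Function.Embedding.subtype _)
  have mem_C {v : V} (hv : v ∈ R) : v ∈ C ↔ c ⟨v, hv⟩ = Fin.last n := by simp [C, hv]
  have hCR : C ⊆ R := fun v hv => Finset.property_of_mem_map_subtype _ hv
  refine ⟨C, hCR, fun u hu v hv huv => ?_, ⟨Coloring.mk
    (fun v => (c ⟨v, (Finset.mem_sdiff.1 v.2).1⟩).castPred fun h =>
      (Finset.mem_sdiff.1 v.2).2 ((mem_C _).2 h)) fun {u v} huv h => ?_⟩⟩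
  · by_contra hadj
    have hu' := (mem_C (hCR hu)).1 hu
    have hv' := (mem_C (hCR hv)).1 hv
    exact c.valid (v := ⟨u, hCR hu⟩) (w := ⟨v, hCR hv⟩) ⟨huv, hadj⟩ (hu'.trans hv'.symm)
  · exact c.valid (v := ⟨u, (Finset.mem_sdiff.1 u.2).1⟩) (w := ⟨v, (Finset.mem_sdiff.1 v.2).1⟩)
      huv (Fin.castPred_inj.1 h)

lemma colorable_compl_succ_of_isClique {R C : Finset V} {n : ℕ} (hC : G.IsClique (C : Set V))
    (hR : (Gᶜ.induce ((R \ C : Finset V) : Set V)).Colorable n) :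
    (Gᶜ.induce (R : Set V)).Colorable (n + 1) := by
  obtain ⟨c⟩ := hR
  let c' : ((R : Set V) : Type _) → Option (Fin n) := fun v =>
    if hv : v.1 ∈ C then none else some (c ⟨v, Finset.mem_sdiff.2 ⟨v.2, hv⟩⟩)
  have valid : ∀ {u v : (R : Set V)}, (Gᶜ.induce (R : Set V)).Adj u v → c' u ≠ c' v := by
    intro u v huv
    by_cases hu : u.1 ∈ C <;> by_cases hv : v.1 ∈ C
    · exact absurd (hC hu hv huv.1) huv.2
    · simp [c', hu, hv]
    · simp [c', hu, hv]
    · simpa [c', hu, hv] using c.valid (v := ⟨u, _⟩) (w := ⟨v, _⟩) huv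
  simpa using (Coloring.mk c' valid).colorable

end CliqueCover

section GreedyCover

variable {V : Type*} {G : SimpleGraph V}

lemma colorable_compl_card (W : Finset V) : (Gᶜ.induce (W : Set V)).Colorable W.card := by
  simpa using (Gᶜ.induce (W : Set V)).colorable_of_fintype

/-- Greedy matching: removing an edge `ab` with `a ∈ A` destroys at most two vertices of `A`. -/
lemma exists_colorable_compl_of_degIn_eq_one {A W : Finset V} (hAW : A ⊆ W)
    (hA : ∀ a ∈ A, degIn G W a = 1) (hW : ∀ w ∈ W, degIn G A w ≤ 2) :
    ∃ n, 2 * n + A.card ≤ 2 * W.card ∧ (Gᶜ.induce (W : Set V)).Colorable n := by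
  classical
  induction W using Finset.strongInduction generalizing A with | H W ih =>
  obtain rfl | ⟨a, ha⟩ := A.eq_empty_or_nonempty
  · exact ⟨W.card, by simp, colorable_compl_card W⟩
  have eq_of_adj {x y z : V} (hx : x ∈ A) (hy : y ∈ W) (hz : z ∈ W) :
      G.Adj x y → G.Adj x z → y = z := eq_of_adj_of_degIn_le_one (hA x hx).le hy hz
  obtain ⟨b, hb, hab⟩ := degIn_pos_iff.1 (hA a ha ▸ one_pos)
  let N := insert b (A.filter fun w => G.Adj b w)
  have hN : (A ∩ N).card ≤ 2 := by
    by_cases hbA : b ∈ A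
    · have hNab : A ∩ N ⊆ {a, b} := fun w hw => by
        have := fun h => eq_of_adj hbA (hAW (Finset.mem_inter.1 hw).1) (hAW ha) h hab.symm
        grind
      exact (Finset.card_le_card hNab).trans Finset.card_le_two
    · have hNb : A ∩ N ⊆ A.filter fun w => G.Adj b w := by grind
      exact (Finset.card_le_card hNb).trans (hW b hb)
  have hA' : ∀ w ∈ A \ N, degIn G (W \ {a, b}) w = 1 := fun w hw => by
    have hwA : w ∈ A := Finset.sdiff_subset hw
    have hwb : ¬ G.Adj w b := fun h => by grind [h.symm]
    have hwa : ¬ G.Adj w a := fun h => by grind [eq_of_adj ha hb (hAW hwA) hab h.symm]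
    rw [degIn_sdiff_of_not_adj (by simp [hwa, hwb]), hA w hwA]
  obtain ⟨n, hn, hcol⟩ := ih (W \ {a, b}) (Finset.sdiff_ssubset (by grind) (by simp))
    (by grind [hab.symm]) hA' fun w hw =>
      (degIn_mono Finset.sdiff_subset).trans (hW w (Finset.sdiff_subset hw))
  refine ⟨n + 1, ?_, colorable_compl_succ_of_isClique (C := {a, b}) ?_ hcol⟩
  · have hAcard := Finset.card_sdiff_add_card_inter A N
    have hWcard := Finset.card_sdiff_add_card_eq_card (s := {a, b}) (t := W) (by grind)
    rw [Finset.card_pair hab.ne] at hWcard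
    omega
  · simpa [isClique_pair] using fun _ => hab

end GreedyCover

section HamiltonConnected

variable {V : Type*} {G : SimpleGraph V}

/-- The vertices `x` and `y` are joined by a path of `G` whose vertex set is exactly `A`; the case
`A = univ` is a Hamiltonian path. -/
def JoinedOn (G : SimpleGraph V) (A : Finset V) (x y : V) : Prop :=
  ∃ p : G.Walk x y, p.IsPath ∧ ∀ v, v ∈ p.support ↔ v ∈ A

namespace JoinedOn

variable {A C : Finset V} {x y z : V}

lemma refl (x : V) : JoinedOn G {x} x x := ⟨.nil, by simp, by simp⟩

lemma symm (h : JoinedOn G A x y) : JoinedOn G A y x :=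
  let ⟨p, hp, hA⟩ := h
  ⟨p.reverse, hp.reverse, by simpa using hA⟩

variable [DecidableEq V]

lemma cons (hxy : G.Adj x y) (hx : x ∉ A) (h : JoinedOn G A y z) :
    JoinedOn G (insert x A) x z := by
  obtain ⟨p, hp, hA⟩ := h
  exact ⟨.cons hxy p, hp.cons (by rwa [hA]), by simp [hA]⟩

lemma cons_clique (hC : G.IsClique (C : Set V)) (hCA : Disjoint C A) (hx : x ∉ C ∪ A)
    (hxC : ∀ v ∈ C, G.Adj x v) (hCy : ∀ v ∈ C, G.Adj v y) (hxy : G.Adj x y)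
    (h : JoinedOn G A y z) : JoinedOn G (insert x (C ∪ A)) x z := by
  induction C using Finset.induction generalizing x with
  | empty => simpa using h.cons hxy (by simpa using hx)
  | insert v C hv ih =>
    rw [Finset.coe_insert, isClique_insert_of_notMem (by simpa using hv)] at hC
    rw [Finset.disjoint_insert_left] at hCA
    rw [Finset.forall_mem_insert] at hxC hCy
    have hvz : JoinedOn G (insert v (C ∪ A)) v z :=
      ih hC.1 hCA.2 (by simp [hv, hCA.1]) hC.2 hCy.2 hCy.1
    rw [Finset.insert_union] at hx ⊢
    exact hvz.cons hxC.1 hx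

end JoinedOn

variable [DecidableEq V] {K R : Finset V} {u w x y : V}

lemma JoinedOn.of_isUniversal_of_colorable_compl (hK : ∀ v ∈ K, G.IsUniversal v)
    (hu : G.IsUniversal u) (hw : G.IsUniversal w) (huR : u ∉ insert w (K ∪ R)) (hwR : w ∉ K ∪ R)
    (hKR : Disjoint K R) (hR : (Gᶜ.induce (R : Set V)).Colorable (K.card + 1)) :
    JoinedOn G (insert u (insert w (K ∪ R))) u w := by
  induction K using Finset.induction generalizing u R with
  | empty =>
    obtain ⟨C, hCR, hC, hRC⟩ := exists_isClique_colorable_compl_sdiff hR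
    obtain rfl : C = R := by
      have : IsEmpty ((R \ C : Finset V) : Set V) := colorable_zero_iff.1 hRC
      exact hCR.antisymm fun v hv => by_contra fun hvC => this.false ⟨v, by simp [hv, hvC]⟩
    have h := (JoinedOn.refl (G := G) w).cons_clique (C := C) (x := u) hC (by simp_all) (by grind)
      (fun v hv => hu (by grind)) (fun v hv => (hw (by grind)).symm) (hu (by grind))
    convert h using 1
    grind
  | insert k K hk ih =>
    rw [Finset.card_insert_of_notMem hk] at hR
    rw [Finset.forall_mem_insert] at hK
    rw [Finset.disjoint_left] at hKR
    obtain ⟨C, hCR, hC, hRC⟩ := exists_isClique_colorable_compl_sdiff hR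
    have hkw : JoinedOn G (insert k (insert w (K ∪ R \ C))) k w :=
      ih hK.2 hK.1 (by grind) (by grind) (by rw [Finset.disjoint_left]; grind) hRC
    have h := hkw.cons_clique (x := u) hC (by rw [Finset.disjoint_left]; grind) (by grind)
      (fun v hv => hu (by grind)) (fun v hv => (hK.1 (by grind)).symm) (hu (by grind))
    convert h using 1
    grind

lemma JoinedOn.of_mem_of_colorable_compl (hK : ∀ v ∈ K, G.IsUniversal v) (hKR : Disjoint K R)
    (hR : (Gᶜ.induce (R : Set V)).Colorable (K.card - 1)) (hu : u ∈ K) (hw : w ∈ K)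
    (huw : u ≠ w) : JoinedOn G (K ∪ R) u w := by
  have hcard : ((K.erase u).erase w).card + 1 = K.card - 1 := by
    rw [Finset.card_erase_add_one (by grind), Finset.card_erase_of_mem hu]
  rw [Finset.disjoint_left] at hKR
  have h := JoinedOn.of_isUniversal_of_colorable_compl (K := (K.erase u).erase w) (R := R)
    (u := u) (w := w) (by grind) (hK u hu) (hK w hw) (by grind) (by grind)
    (by rw [Finset.disjoint_left]; grind) (by rwa [hcard])
  convert h using 1
  grind

lemma JoinedOn.insert_of_colorable_compl (hK : ∀ v ∈ K, G.IsUniversal v) (hK2 : 2 ≤ K.card)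
    (hKR : Disjoint K R) (hR : (Gᶜ.induce (R : Set V)).Colorable (K.card - 1)) (hx : x ∉ R)
    (hw : w ∈ K) (hxw : x ≠ w) : JoinedOn G (insert x (K ∪ R)) x w := by
  by_cases hxK : x ∈ K
  · rw [Finset.insert_eq_self.2 (Finset.mem_union_left R hxK)]
    exact .of_mem_of_colorable_compl hK hKR hR hxK hw hxw
  · obtain ⟨u, hu, huw⟩ := Finset.exists_mem_ne hK2 w
    exact (JoinedOn.of_mem_of_colorable_compl hK hKR hR hu hw huw).cons
      (hK u hu (by grind)).symm (by grind)

/-- Universal vertices serve as connectors: `|K|` of them link up `|K| - 1` cliques. -/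
theorem hamConn_of_colorable_compl [Fintype V] (hK : ∀ v ∈ K, G.IsUniversal v)
    (hK2 : 2 ≤ K.card)
    (hcol : (Gᶜ.induce ((Kᶜ : Finset V) : Set V)).Colorable (K.card - 1)) : HamConn G := by
  intro x y hxy
  let R := (Kᶜ.erase x).erase y
  have hRK : R ⊆ Kᶜ := (Finset.erase_subset _ _).trans (Finset.erase_subset _ _)
  have hKR : Disjoint K R := disjoint_compl_right.mono_right hRK
  have hR : (Gᶜ.induce (R : Set V)).Colorable (K.card - 1) :=
    hcol.of_hom (induceHomOfLE Gᶜ (Finset.coe_subset.2 hRK)).toHom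
  have hjoin : JoinedOn G (insert y (insert x (K ∪ R))) x y := by
    by_cases hy : y ∈ K
    · rw [Finset.insert_eq_self.2 (by grind)]
      exact .insert_of_colorable_compl hK hK2 hKR hR (by grind) hy hxy
    · obtain ⟨w, hw, hwx⟩ := Finset.exists_mem_ne hK2 x
      have hxw := JoinedOn.insert_of_colorable_compl hK hK2 hKR hR (by grind) hw hwx.symm
      exact (hxw.symm.cons (hK w hw (by grind)).symm (by grind)).symm
  obtain ⟨p, hp, hmem⟩ := hjoin
  refine ⟨p, hp.isHamiltonian_of_mem fun v => (hmem v).2 ?_⟩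
  simp only [R, Finset.mem_insert, Finset.mem_union, Finset.mem_erase, Finset.mem_compl]
  tauto

end HamiltonConnected

section WgraphIso

variable {V W : Type*} [Fintype V] [Fintype W]

lemma exists_equiv_of_card_fiber_eq {γ : Type*} [DecidableEq γ] {f : V → γ} {g : W → γ}
    (h : ∀ i, (Finset.univ.filter fun v => f v = i).card =
      (Finset.univ.filter fun w => g w = i).card) : ∃ e : V ≃ W, ∀ v, g (e v) = f v := by
  have e (i : γ) : {v // f v = i} ≃ {w // g w = i} :=
    Fintype.equivOfCardEq (by simpa only [Fintype.card_subtype] using h i)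
  exact ⟨Equiv.ofFiberEquiv e, Equiv.ofFiberEquiv_map e⟩

lemma exists_equiv_of_card_eq {K T : Finset V} {K' T' : Finset W} (hKT : K ⊆ T) (hKT' : K' ⊆ T')
    (hV : Fintype.card V = Fintype.card W) (hK : K.card = K'.card) (hT : T.card = T'.card) :
    ∃ e : V ≃ W, (∀ v, e v ∈ K' ↔ v ∈ K) ∧ ∀ v, e v ∈ T' ↔ v ∈ T := by
  classical
  have hsdiff : (T \ K).card = (T' \ K').card := by
    rw [Finset.card_sdiff_of_subset hKT, Finset.card_sdiff_of_subset hKT', hK, hT]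
  have hcompl : Tᶜ.card = T'ᶜ.card := by rw [Finset.card_compl, Finset.card_compl, hV, hT]
  let f (v : V) : Fin 3 := if v ∈ K then 0 else if v ∈ T then 1 else 2
  let g (w : W) : Fin 3 := if w ∈ K' then 0 else if w ∈ T' then 1 else 2
  obtain ⟨e, he⟩ := exists_equiv_of_card_fiber_eq (f := f) (g := g) fun i => by
    fin_cases i
    · convert hK using 2 <;> ext <;> grind
    · convert hsdiff using 2 <;> ext <;> grind
    · convert hcompl using 2 <;> ext <;> grind [Finset.mem_compl]
  exact ⟨e, fun v => by grind, fun v => by grind⟩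

lemma nonempty_iso_Wgraph {G : SimpleGraph V} {c k : ℕ} (hV : Fintype.card V = c)
    {K T : Finset V} (hKT : K ⊆ T) (hK : K.card = k) (hT : T.card = c - k + 1)
    (hadj : ∀ a b, a ≠ b → (G.Adj a b ↔ (a ∈ T ∧ b ∈ T) ∨ a ∈ K ∨ b ∈ K)) :
    Nonempty (G ≃g Wgraph c k c) := by
  have hKc : k ≤ c := hK ▸ hV ▸ K.card_le_univ
  have hTc : c - k + 1 ≤ c := hT ▸ hV ▸ T.card_le_univ
  have hkT : k ≤ c - k + 1 := by
    simpa only [hK, hT] using Finset.card_le_card hKT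
  obtain ⟨e, heK, heT⟩ := exists_equiv_of_card_eq (W := Fin c)
    (K' := Finset.univ.filter fun i => i.val < k)
    (T' := Finset.univ.filter fun i => i.val < c - k + 1) hKT
    (Finset.monotone_filter_right _ fun i _ hi => hi.trans_le hkT) (by simpa using hV)
    (by rw [Fin.card_filter_val_lt, hK, min_eq_right hKc])
    (by rw [Fin.card_filter_val_lt, hT, min_eq_right hTc])
  simp only [Finset.mem_filter_univ] at heK heT
  refine ⟨e, fun {a b} => ?_⟩
  obtain rfl | hab := eq_or_ne a b
  · simp
  rw [hadj a b hab]
  simp only [Wgraph, fromRel_adj, heK, heT, e.injective.ne hab, true_and, ne_eq, not_false_eq_true]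
  tauto

end WgraphIso

section Structure

variable {V : Type*} {G : SimpleGraph V} {S K : Finset V} {t : V} {m n : ℕ}

lemma mul_le_sum_deficiency (h : ∀ s ∈ S, Gᶜ.Adj t s → degN G s + n ≤ m) :
    degIn Gᶜ S t * n ≤ ∑ s ∈ S, (m - degN G s) := by
  classical
  rw [degIn, Finset.card_filter, Finset.sum_mul]
  refine Finset.sum_le_sum fun s hs => ?_
  split_ifs with hts
  · have := h s hs hts
    omega
  · simp

lemma card_le_card_filter_degN_add_sum (hdeg : ∀ s ∈ S, degN G s ≤ n) :
    S.card ≤ (S.filter fun s => degN G s = n).card + ∑ s ∈ S, (n - degN G s) := by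
  rw [Finset.card_filter, ← Finset.sum_add_distrib, Finset.card_eq_sum_ones]
  refine Finset.sum_le_sum fun s hs => ?_
  have := hdeg s hs
  split_ifs <;> omega

variable [Fintype V] [DecidableEq V]

lemma two_mul_hN (m j : ℕ) : 2 * hN (m + j + 1) j = (m + 1) * m + 2 * (j * (j - 1)) := by
  rw [hN, show m + j + 1 - j = m + 1 by omega, Nat.choose_two_right, mul_add,
    Nat.mul_div_cancel' (Nat.even_mul_pred_self _).two_dvd, Nat.add_sub_cancel]

lemma sum_degN_add_deficiency {n : ℕ} (hdeg : ∀ s ∈ S, degN G s ≤ n) :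
    ∑ s ∈ S, degIn G S s + ∑ s ∈ S, degIn G Sᶜ s + ∑ s ∈ S, (n - degN G s) = S.card * n := by
  rw [← Finset.sum_add_distrib, ← Finset.sum_add_distrib]
  refine Finset.sum_const_nat fun s hs => ?_
  rw [← degN_eq_degIn_add_degIn_compl, Nat.add_sub_cancel' (hdeg s hs)]

lemma deficiency_le (hdeg : ∀ s ∈ S, degN G s ≤ S.card + 1)
    (he : hN (Fintype.card V + 1) S.card < G.edgeSet.ncard) :
    ∑ s ∈ S, degIn G S s + ∑ t ∈ Sᶜ, degIn Gᶜ Sᶜ t + 2 * ∑ s ∈ S, (S.card + 1 - degN G s)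
      + 2 * Sᶜ.card + 2 ≤ 4 * S.card := by
  have hcard := S.card_add_card_compl
  have hedges := sum_degN (G := G)
  have hS := sum_degN_add_deficiency hdeg
  have hT := sum_degIn_add_sum_degIn_compl (G := G) Sᶜ
  have hcomm := sum_degIn_comm (G := G) S Sᶜ
  rw [← Finset.sum_add_sum_compl S] at hedges
  simp only [degN_eq_degIn_add_degIn_compl (G := G) S, Finset.sum_add_distrib] at hedges hS ⊢
  have hh := two_mul_hN Sᶜ.card S.card
  rw [add_comm Sᶜ.card, hcard] at hh
  have hpred : S.card * (S.card - 1) + S.card = S.card * S.card := by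
    cases S.card <;> simp [mul_add]
  nlinarith

lemma adj_of_degIn_compl_lt
    (hclosed : ∀ u v, Gᶜ.Adj u v → degN G u + degN G v ≤ Fintype.card V)
    (hdef : ∑ t ∈ Sᶜ, degIn Gᶜ Sᶜ t + 2 * ∑ s ∈ S, (S.card + 1 - degN G s) + 2 < 2 * S.card)
    (ht : t ∈ Sᶜ) (hlt : degIn Gᶜ Sᶜ t < degIn G S t) : ∀ s ∈ S, G.Adj t s := by
  have hcard := S.card_add_card_compl
  have hS := degIn_add_degIn_compl_of_notMem (G := G) (Finset.mem_compl.1 ht)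
  have hT := degIn_add_degIn_compl_of_mem (G := G) ht
  have hsum := two_mul_degIn_le_sum (G := Gᶜ) ht
  obtain ⟨y, hy⟩ := Nat.exists_eq_add_of_lt hlt
  have hxy : degIn Gᶜ S t * (y + 1) ≤ ∑ s ∈ S, (S.card + 1 - degN G s) :=
    mul_le_sum_deficiency fun s _ hts => by
      have := hclosed t s hts
      rw [degN_eq_degIn_add_degIn_compl S t] at this
      omega
  refine degIn_eq_card_iff.1 ?_
  by_contra hne
  have hx : 1 ≤ degIn Gᶜ S t := by omega
  nlinarith [Nat.mul_le_mul_right y hx]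

lemma isUniversal_of_forall_adj
    (hclosed : ∀ u v, Gᶜ.Adj u v → degN G u + degN G v ≤ Fintype.card V)
    (hq : ∑ t ∈ Sᶜ, degIn Gᶜ Sᶜ t + 6 < 2 * Sᶜ.card) (ht : t ∈ Sᶜ) (hS : ∀ s ∈ S, G.Adj t s) :
    G.IsUniversal t := by
  intro w htw
  by_cases hw : w ∈ S
  · exact hS w hw
  by_contra hadj
  rw [← Finset.mem_compl] at hw
  have hsum := two_mul_degIn_add_degIn_le_sum (G := Gᶜ) ht hw htw
  have hdegsum := hclosed t w ⟨htw, hadj⟩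
  rw [degN_eq_degIn_add_degIn_compl S t, degN_eq_degIn_add_degIn_compl S w,
    degIn_eq_card_iff.2 hS, ← S.card_add_card_compl] at hdegsum
  have htT := degIn_add_degIn_compl_of_mem (G := G) ht
  have hwT := degIn_add_degIn_compl_of_mem (G := G) hw
  omega

lemma isUniversal_of_degIn_compl_lt (hST : S.card + 2 ≤ Sᶜ.card)
    (hclosed : ∀ u v, Gᶜ.Adj u v → degN G u + degN G v ≤ Fintype.card V)
    (hdeg : ∀ s ∈ S, degN G s ≤ S.card + 1)
    (he : hN (Fintype.card V + 1) S.card < G.edgeSet.ncard)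
    (ht : t ∈ Sᶜ) (hlt : degIn Gᶜ Sᶜ t < degIn G S t) : G.IsUniversal t := by
  have hdef := deficiency_le hdeg he
  exact isUniversal_of_forall_adj hclosed (by omega) ht
    (adj_of_degIn_compl_lt hclosed (by omega) ht hlt)

lemma card_mul_sub_card_le_sum (hmax : ∀ t ∈ Sᶜ \ K, degIn G S t ≤ degIn Gᶜ Sᶜ t)
    (hKS : K ⊆ Sᶜ) : S.card * (n - K.card) ≤
      ∑ s ∈ S, degIn G S s + ∑ t ∈ Sᶜ, degIn Gᶜ Sᶜ t + ∑ s ∈ S, (n - degN G s) := by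
  have hs (s : V) : n - K.card ≤ degIn G S s + degIn G (Sᶜ \ K) s + (n - degN G s) := by
    have hsplit := degIn_add_degIn_sdiff (G := G) (v := s) hKS
    have hK : degIn G K s ≤ K.card := degIn_le_card
    have hdeg := degN_eq_degIn_add_degIn_compl (G := G) S s
    omega
  calc S.card * (n - K.card)
      ≤ ∑ s ∈ S, (degIn G S s + degIn G (Sᶜ \ K) s + (n - degN G s)) :=
        Finset.card_nsmul_le_sum _ _ _ fun s _ => hs s
    _ = ∑ s ∈ S, degIn G S s + ∑ t ∈ Sᶜ \ K, degIn G S t + ∑ s ∈ S, (n - degN G s) := by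
        rw [Finset.sum_add_distrib, Finset.sum_add_distrib, sum_degIn_comm S (Sᶜ \ K)]
    _ ≤ ∑ s ∈ S, degIn G S s + ∑ t ∈ Sᶜ, degIn Gᶜ Sᶜ t + ∑ s ∈ S, (n - degN G s) := by
        gcongr
        exact (Finset.sum_le_sum hmax).trans (Finset.sum_le_sum_of_subset Finset.sdiff_subset)

lemma card_le_card_of_degIn_le (hST : S.card + 2 ≤ Sᶜ.card)
    (hdeg : ∀ s ∈ S, degN G s ≤ S.card + 1)
    (he : hN (Fintype.card V + 1) S.card < G.edgeSet.ncard) (hKS : K ⊆ Sᶜ)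
    (hmax : ∀ t ∈ Sᶜ \ K, degIn G S t ≤ degIn Gᶜ Sᶜ t) : S.card ≤ K.card := by
  have hdef := deficiency_le hdeg he
  have hsum := card_mul_sub_card_le_sum (n := S.card + 1) hmax hKS
  by_contra! hlt
  have hmul : S.card * 2 ≤ S.card * (S.card + 1 - K.card) := Nat.mul_le_mul_left _ (by omega)
  omega

end Structure

section UniversalVertices

variable {V : Type*} {G : SimpleGraph V} {S K : Finset V} {a b s v : V}

lemma coe_subset_neighborSet_of_isUniversal (hK : ∀ v ∈ K, G.IsUniversal v) (hs : s ∉ K) :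
    (K : Set V) ⊆ G.neighborSet s :=
  fun v hv => (hK v hv (ne_of_mem_of_not_mem hv hs)).symm

lemma adj_iff_mem_of_degN_le_card [Finite V] (hK : ∀ v ∈ K, G.IsUniversal v) (hs : s ∉ K)
    (hdeg : degN G s ≤ K.card) : G.Adj s v ↔ v ∈ K := by
  have heq := Set.eq_of_subset_of_ncard_le (coe_subset_neighborSet_of_isUniversal hK hs)
    (by rwa [Set.ncard_coe_finset])
  rw [← mem_neighborSet, ← heq, Finset.mem_coe]

variable [Fintype V] [DecidableEq V]

lemma degN_eq_card_add_degIn_compl_of_isUniversal (hK : ∀ v ∈ K, G.IsUniversal v) (hv : v ∉ K) :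
    degN G v = K.card + degIn G Kᶜ v := by
  rw [degN_eq_degIn_add_degIn_compl K,
    degIn_eq_card_iff.2 (coe_subset_neighborSet_of_isUniversal hK hv)]

lemma card_le_of_isUniversal {n : ℕ} (hS : S.Nonempty) (hdeg : ∀ s ∈ S, degN G s ≤ n)
    (hKS : K ⊆ Sᶜ) (hK : ∀ v ∈ K, G.IsUniversal v) : K.card ≤ n := by
  obtain ⟨s, hs⟩ := hS
  have hsK : s ∉ K := fun h => Finset.mem_compl.1 (hKS h) hs
  have := degN_eq_card_add_degIn_compl_of_isUniversal hK hsK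
  have := hdeg s hs
  omega

lemma adj_of_isHamiltonian_of_notMem (hham : G.IsHamiltonian)
    (hV : Fintype.card V < 2 * S.card + 4) (hS : ∀ s ∈ S, ∀ v, G.Adj s v ↔ v ∈ K)
    (hKS : Disjoint S K) (ha : a ∉ S ∪ K) (hb : b ∉ S ∪ K) (hab : a ≠ b) : G.Adj a b := by
  by_contra hadj
  rw [Finset.mem_union, not_or] at ha hb
  have hSindep : ∀ s ∈ S, ∀ v ∉ K, ¬ G.Adj s v := fun s hs v hv h => hv ((hS s hs v).1 h)
  have hindep : G.IsIndepSet ((insert a (insert b S) : Finset V) : Set V) := by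
    have hsymm := G.adj_comm
    simp only [isIndepSet_iff, Finset.coe_insert, Set.Pairwise, Set.mem_insert_iff,
      Finset.mem_coe]
    rw [Finset.disjoint_left] at hKS
    grind
  have hcard : (insert a (insert b S)).card = S.card + 2 := by
    rw [Finset.card_insert_of_notMem (by simp [hab, ha]), Finset.card_insert_of_notMem hb.1]
  have := two_mul_card_le_card_of_isIndepSet hham
    (Fintype.one_lt_card_iff.2 ⟨a, b, hab⟩).ne' hindep
  omega

lemma nonempty_iso_Wgraph_of_card_eq_add_one (hST : Sᶜ.card ≤ S.card + 3) (hham : G.IsHamiltonian)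
    (hdeg : ∀ s ∈ S, degN G s ≤ S.card + 1) (hKS : K ⊆ Sᶜ) (hK : ∀ v ∈ K, G.IsUniversal v)
    (hKcard : K.card = S.card + 1) :
    Nonempty (G ≃g Wgraph (Fintype.card V) (S.card + 1) (Fintype.card V)) := by
  have hcard := S.card_add_card_compl
  have hle := Finset.card_le_card hKS
  have hdisj : Disjoint S K := (Finset.subset_compl_iff_disjoint_left).1 hKS
  have hS : ∀ s ∈ S, ∀ v, G.Adj s v ↔ v ∈ K := fun s hs v =>
    adj_iff_mem_of_degN_le_card hK (Finset.disjoint_left.1 hdisj hs) (hKcard ▸ hdeg s hs)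
  refine nonempty_iso_Wgraph rfl hKS hKcard (by omega) fun a b hab => ?_
  have hclique := adj_of_isHamiltonian_of_notMem (a := a) (b := b) hham (by omega) hS hdisj
  have hKa := fun ha => hK a ha hab
  have hKb := fun hb => (hK b hb hab.symm).symm
  have hSa := fun ha => hS a ha b
  have hSb := fun hb => (G.adj_comm a b).trans (hS b hb a)
  simp only [Finset.mem_compl]
  grind

lemma degIn_le_two_of_notMem (hST : Sᶜ.card ≤ K.card + 3) (hdeg : ∀ s ∈ S, degN G s ≤ K.card + 1)
    (hKS : K ⊆ Sᶜ) (hK : ∀ v ∈ K, G.IsUniversal v)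
    (hmax : ∀ t ∈ Sᶜ \ K, degIn G S t ≤ degIn Gᶜ Sᶜ t) (hv : v ∉ K) : degIn G S v ≤ 2 := by
  by_cases hvS : v ∈ S
  · have hmono : degIn G S v ≤ degIn G Kᶜ v := degIn_mono (Finset.subset_compl_comm.1 hKS)
    have := degN_eq_card_add_degIn_compl_of_isUniversal hK hv
    have := hdeg v hvS
    omega
  · rw [← Finset.mem_compl] at hvS
    have hKv : K.card ≤ degIn G Sᶜ v := by
      rw [← degIn_eq_card_iff.2 (coe_subset_neighborSet_of_isUniversal hK hv)]
      exact degIn_mono hKS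
    have := hmax v (Finset.mem_sdiff.2 ⟨hvS, hv⟩)
    have := degIn_add_degIn_compl_of_mem (G := G) hvS
    omega

lemma hamConn_of_card_eq (hST : S.card + 2 ≤ Sᶜ.card) (hST' : Sᶜ.card ≤ S.card + 3)
    (hdeg : ∀ s ∈ S, degN G s ≤ S.card + 1)
    (he : hN (Fintype.card V + 1) S.card < G.edgeSet.ncard) (hKS : K ⊆ Sᶜ)
    (hK : ∀ v ∈ K, G.IsUniversal v) (hKcard : K.card = S.card)
    (hmax : ∀ t ∈ Sᶜ \ K, degIn G S t ≤ degIn Gᶜ Sᶜ t) : HamConn G := by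
  have hdef := deficiency_le hdeg he
  have hsum := card_mul_sub_card_le_sum (n := S.card + 1) hmax hKS
  rw [hKcard, Nat.add_sub_cancel_left, mul_one] at hsum
  let A := S.filter fun s => degN G s = S.card + 1
  have hAS : A ⊆ S := Finset.filter_subset _ _
  have hSK : S ⊆ Kᶜ := Finset.subset_compl_comm.1 hKS
  have hAcard : S.card ≤ A.card + ∑ s ∈ S, (S.card + 1 - degN G s) :=
    card_le_card_filter_degN_add_sum hdeg
  have hA : ∀ a ∈ A, degIn G Kᶜ a = 1 := fun a ha => by
    have := degN_eq_card_add_degIn_compl_of_isUniversal hK (Finset.mem_compl.1 (hSK (hAS ha)))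
    rw [(Finset.mem_filter.1 ha).2] at this
    omega
  have hW : ∀ w ∈ Kᶜ, degIn G A w ≤ 2 := fun w hw =>
    (degIn_mono hAS).trans (degIn_le_two_of_notMem (by rwa [hKcard]) (by rwa [hKcard]) hKS hK hmax
      (Finset.mem_compl.1 hw))
  obtain ⟨n, hn, hcol⟩ := exists_colorable_compl_of_degIn_eq_one (hAS.trans hSK) hA hW
  have hScard := S.card_add_card_compl
  have hKcompl := K.card_add_card_compl
  exact hamConn_of_colorable_compl hK (by omega) (hcol.mono (by omega))

end UniversalVertices

/-- A `(c+1)`-closed, Hamiltonian, non-Hamiltonian-connected graph on `c ≥ 6` vertices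
with more than `h(c+1, ⌊c/2⌋-1)` edges which has `⌊c/2⌋-1` vertices of degree at most
`⌊c/2⌋` is isomorphic to `W_{c, ⌊c/2⌋, c}`. -/
theorem stmt10 {V : Type*} [Fintype V] [DecidableEq V] (G : SimpleGraph V) (c : ℕ)
    (hc : Fintype.card V = c) (hc6 : 6 ≤ c)
    (hclosed : ∀ u v : V, u ≠ v → ¬ G.Adj u v → degN G u + degN G v ≤ c)
    (hham : G.IsHamiltonian) (hnc : ¬ HamConn G)
    (he : G.edgeSet.ncard > hN (c + 1) (c / 2 - 1))
    (hS : ∃ S : Finset V, S.card = c / 2 - 1 ∧ ∀ v ∈ S, degN G v ≤ c / 2) :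
    Nonempty (G ≃g Wgraph c (c / 2) c) := by
  obtain ⟨S, hS, hdeg⟩ := hS
  subst hc
  have hScard : Fintype.card V / 2 = S.card + 1 := by omega
  have hcompl := S.card_add_card_compl
  rw [← hS] at he
  rw [hScard] at hdeg ⊢
  have hST : S.card + 2 ≤ Sᶜ.card := by omega
  have hST' : Sᶜ.card ≤ S.card + 3 := by omega
  let K := Sᶜ.filter fun t => degIn Gᶜ Sᶜ t < degIn G S t
  have hKS : K ⊆ Sᶜ := Finset.filter_subset _ _
  have hK : ∀ v ∈ K, G.IsUniversal v := fun v hv =>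
    isUniversal_of_degIn_compl_lt hST (fun u v huv => hclosed u v huv.1 huv.2) hdeg he (hKS hv)
      (Finset.mem_filter.1 hv).2
  have hmax : ∀ t ∈ Sᶜ \ K, degIn G S t ≤ degIn Gᶜ Sᶜ t := by grind
  have hle : S.card ≤ K.card := card_le_card_of_degIn_le hST hdeg he hKS hmax
  have hge : K.card ≤ S.card + 1 :=
    card_le_of_isUniversal (Finset.card_pos.1 (by omega)) hdeg hKS hK
  obtain hKcard | hKcard : K.card = S.card ∨ K.card = S.card + 1 := by omega
  · exact absurd (hamConn_of_card_eq hST hST' hdeg he hKS hK hKcard hmax) hnc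
  · exact nonempty_iso_Wgraph_of_card_eq_add_one hST' hham hdeg hKS hK hKcard
end

section
/- Let G be a 2-connected graph, C a longest cycle of G, and R a connected component of G - C. If x, y are distinct vertices of C each having a neighbor in R, and P is an (x,y)-path all of whose internal vertices lie in R (so P has length at least 2), then the successors x⁺ and y⁺ of x and y on C (in a fixed orientation) are nonadjacent. In particular, the set (N_C(R))⁺ of successors on C of vertices of C with a neighbor in R is a stable (independent) set. -/
open SimpleGraph

/-- A graph is 2-connected: at least 3 vertices and deleting any vertex leaves it connected. -/
def TwoConnected {V : Type*} [Fintype V] (G : SimpleGraph V) : Prop :=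
  3 ≤ Fintype.card V ∧
    ∀ v : V, (((⊤ : G.Subgraph).deleteVerts {v}).coe).Connected

/-- `p` is a longest cycle of `G`. -/
def IsLongestCycle {V : Type*} (G : SimpleGraph V) {v0 : V} (p : G.Walk v0 v0) : Prop :=
  p.IsCycle ∧ ∀ (w : V) (q : G.Walk w w), q.IsCycle → q.length ≤ p.length

/-- `R` is the vertex set of a connected component of `G - Cs` (the graph obtained
from `G` by deleting the vertex set `Cs`). -/
def IsCompOutside {V : Type*} (G : SimpleGraph V) (Cs R : Set V) : Prop :=
  R.Nonempty ∧ Disjoint R Cs ∧ (G.induce R).Connected ∧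
    ∀ u ∈ R, ∀ v : V, G.Adj u v → v ∈ R ∪ Cs

/-!
Suppose `x⁺` and `y⁺` were adjacent. Starting at `y`, follow `C` backwards to `x⁺`, cross to `y⁺`
and follow `C` forwards to `x`: this is a path through all the vertices of `C`, with one edge less
than `C`. Closing it up by a path of length at least two from `x` to `y` that avoids `C` in between
gives a cycle longer than `C`.
-/

section CycleRerouting

variable {V : Type*} {G : SimpleGraph V} {u v x x' y y' : V}

lemma exists_eq_append_cons_of_lt_length (p : G.Walk u v) {i : ℕ} (hi : i < p.length)
    (hx : p.getVert i = x) (hx' : p.getVert (i + 1) = x') :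
    ∃ (a : G.Walk u x) (h : G.Adj x x') (b : G.Walk x' v),
      p = a.append (.cons h b) ∧ a.length = i := by
  subst hx
  have hdrop : ¬ (p.drop i).Nil := by
    rw [← Walk.length_eq_zero_iff, Walk.drop_length]
    lia
  obtain ⟨w, h, b, hb⟩ := Walk.not_nil_iff.mp hdrop
  obtain rfl : w = x' := by simpa [hb, hx'] using p.drop_getVert i 1
  refine ⟨p.take i, h, b, ?_, by rw [Walk.take_length, min_eq_left hi.le]⟩
  rw [← hb, p.append_take_drop_eq]

lemma exists_eq_append_cons_append_cons_of_lt_of_lt_length (p : G.Walk u v) {i j : ℕ}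
    (hij : i < j) (hj : j < p.length) :
    ∃ (a : G.Walk u (p.getVert i)) (hx : G.Adj (p.getVert i) (p.getVert (i + 1)))
      (b : G.Walk (p.getVert (i + 1)) (p.getVert j))
      (hy : G.Adj (p.getVert j) (p.getVert (j + 1))) (d : G.Walk (p.getVert (j + 1)) v),
      p = a.append (.cons hx (b.append (.cons hy d))) := by
  obtain ⟨c, hyy', d, hp, hc⟩ := exists_eq_append_cons_of_lt_length p hj rfl rfl
  have hget {k : ℕ} (hk : k ≤ j) : c.getVert k = p.getVert k := by
    rw [congrArg (·.getVert k) hp, Walk.getVert_append', if_pos (hk.trans_eq hc.symm)]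
  obtain ⟨a, hxx', b, rfl, -⟩ :=
    exists_eq_append_cons_of_lt_length c (hij.trans_eq hc.symm) (hget hij.le) (hget hij)
  exact ⟨a, hxx', b, hyy', d, hp.trans (by rw [← Walk.append_assoc, Walk.cons_append])⟩

lemma support_reverse_append_cons_append_perm (a : G.Walk u x) (hx : G.Adj x x')
    (b : G.Walk x' y) (hy : G.Adj y y') (d : G.Walk y' u) (h : G.Adj x' y') :
    (b.reverse.append (.cons h (d.append a))).support.Perm
      (a.append (.cons hx (b.append (.cons hy d)))).support.tail := by
  rw [Walk.tail_support_append]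
  simp only [Walk.support_append, Walk.support_reverse, Walk.support_cons, List.tail_cons]
  rw [← List.append_assoc]
  exact List.perm_append_comm.trans (((List.reverse_perm _).append_right _).append_left _)

lemma exists_isPath_of_isCycle_of_adj_getVert_succ {p : G.Walk u u} (hp : p.IsCycle) {i j : ℕ}
    (hi : i < p.length) (hj : j < p.length)
    (hadj : G.Adj (p.getVert (i + 1)) (p.getVert (j + 1))) :
    ∃ r : G.Walk (p.getVert j) (p.getVert i),
      r.IsPath ∧ r.support ⊆ p.support ∧ r.length + 1 = p.length := by
  wlog hij : i < j generalizing i j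
  · have hji : j < i := (not_lt.mp hij).lt_of_ne fun h ↦ hadj.ne (by rw [h])
    obtain ⟨r, hr, hsub, hlen⟩ := this hj hi hadj.symm hji
    exact ⟨r.reverse, hr.reverse, by simpa using hsub, by simpa using hlen⟩
  obtain ⟨a, hx, b, hy, d, hdecomp⟩ :=
    exists_eq_append_cons_append_cons_of_lt_of_lt_length p hij hj
  have hperm := support_reverse_append_cons_append_perm a hx b hy d hadj
  rw [← hdecomp] at hperm
  refine ⟨b.reverse.append (.cons hadj (d.append a)), ?_, ?_, ?_⟩
  · exact .mk' (hperm.nodup_iff.mpr hp.support_nodup)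
  · exact List.Subset.trans hperm.subset (List.tail_subset _)
  · rw [congrArg Walk.length hdecomp]
    simp only [Walk.length_append, Walk.length_cons, Walk.length_reverse]
    lia

end CycleRerouting

/-- `IsPathThrough R q` says that `q` is a path with at least one internal vertex, all of whose
internal vertices lie in `R`. The ends of `q` may or may not belong to `R`. -/
structure IsPathThrough {V : Type*} {G : SimpleGraph V} {x y : V} (R : Set V)
    (q : G.Walk x y) : Prop where
  isPath : q.IsPath
  two_le_length : 2 ≤ q.length
  mem_of_ne_of_ne : ∀ z ∈ q.support, z ≠ x → z ≠ y → z ∈ R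

namespace IsPathThrough

variable {V : Type*} {G : SimpleGraph V} {R : Set V} {x y : V}

lemma exists_of_reachable {r s : R} (hrs : (G.induce R).Reachable r s) (hxr : G.Adj x r)
    (hsy : G.Adj s y) (hx : x ∉ R) (hy : y ∉ R) (hxy : x ≠ y) :
    ∃ q : G.Walk x y, IsPathThrough R q := by
  obtain ⟨m, hm⟩ := hrs.exists_isPath
  let m' : G.Walk r s := m.map (Embedding.induce R).toHom
  have hm' : m'.IsPath := hm.map Subtype.val_injective
  have hsub : ∀ z ∈ m'.support, z ∈ R := by
    intro z hz
    obtain ⟨t, -, rfl⟩ := List.mem_map.mp (Walk.support_map _ m ▸ hz)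
    exact t.2
  have hxm : x ∉ (m'.concat hsy).support := by
    rw [Walk.support_concat, List.mem_append, List.mem_singleton]
    exact not_or.mpr ⟨fun h ↦ hx (hsub x h), hxy⟩
  refine ⟨.cons hxr (m'.concat hsy),
    (hm'.concat (fun h ↦ hy (hsub y h)) hsy).cons hxm, by simp, fun z hz hzx hzy ↦ hsub z ?_⟩
  simpa [hzx, hzy] using hz

lemma isCycle_append {q : G.Walk x y} (hq : IsPathThrough R q) {r : G.Walk y x} (hr : r.IsPath)
    (hdisj : Disjoint R {z | z ∈ r.support}) : (q.append r).IsCycle := by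
  refine hq.isPath.isCycle_append hr (fun z hzq hzr ↦ ?_) (.inl hq.two_le_length)
  have hzx : z ≠ x := by
    rintro rfl
    exact (List.nodup_cons.mp (q.cons_tail_support ▸ hq.isPath.support_nodup)).1 hzq
  have hzy : z ≠ y := by
    rintro rfl
    exact (List.nodup_cons.mp (r.cons_tail_support ▸ hr.support_nodup)).1 hzr
  exact Set.disjoint_left.mp hdisj
    (hq.mem_of_ne_of_ne z (List.mem_of_mem_tail hzq) hzx hzy) (List.mem_of_mem_tail hzr)

end IsPathThrough

lemma IsLongestCycle.not_adj_getVert_succ {V : Type*} {G : SimpleGraph V} {v0 : V}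
    {p : G.Walk v0 v0} (hC : IsLongestCycle G p) {R : Set V}
    (hR : Disjoint R {x | x ∈ p.support}) {i j : ℕ} (hi : i < p.length) (hj : j < p.length)
    {q : G.Walk (p.getVert i) (p.getVert j)} (hq : IsPathThrough R q) :
    ¬ G.Adj (p.getVert (i + 1)) (p.getVert (j + 1)) := by
  intro hadj
  obtain ⟨r, hr, hsub, hlen⟩ := exists_isPath_of_isCycle_of_adj_getVert_succ hC.1 hi hj hadj
  have hcycle : (q.append r).IsCycle := hq.isCycle_append hr (hR.mono_right hsub)
  have hle : q.length + r.length ≤ p.length := by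
    simpa only [Walk.length_append] using hC.2 _ _ hcycle
  have := hq.two_le_length
  lia

theorem stmt11_general {V : Type*} (G : SimpleGraph V) (v0 : V) (p : G.Walk v0 v0)
    (hC : IsLongestCycle G p) (R : Set V) (hRC : Disjoint R {x | x ∈ p.support})
    (hR : (G.induce R).Preconnected) :
    (∀ i j : ℕ, i < p.length → j < p.length →
      ∀ (P : G.Walk (p.getVert i) (p.getVert j)), P.IsPath → 2 ≤ P.length →
        (∀ w ∈ P.support, w ≠ p.getVert i → w ≠ p.getVert j → w ∈ R) →
        ¬ G.Adj (p.getVert (i + 1)) (p.getVert (j + 1))) ∧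
    (∀ i j : ℕ, i < p.length → j < p.length →
      (∃ r ∈ R, G.Adj (p.getVert i) r) → (∃ r ∈ R, G.Adj (p.getVert j) r) →
      ¬ G.Adj (p.getVert (i + 1)) (p.getVert (j + 1))) := by
  refine ⟨fun i j hi hj P hP hlen hint ↦ hC.not_adj_getVert_succ hRC hi hj ⟨hP, hlen, hint⟩, ?_⟩
  rintro i j hi hj ⟨r, hr, hir⟩ ⟨s, hs, hjs⟩ hadj
  have hnotMem (k : ℕ) : p.getVert k ∉ R :=
    fun h ↦ Set.disjoint_left.mp hRC h (p.getVert_mem_support k)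
  have hne : p.getVert i ≠ p.getVert j := by
    intro h
    have hij : i = j := hC.1.getVert_injOn' (Nat.le_sub_one_of_lt hi) (Nat.le_sub_one_of_lt hj) h
    exact hadj.ne (by rw [hij])
  obtain ⟨q, hq⟩ := IsPathThrough.exists_of_reachable (hR ⟨r, hr⟩ ⟨s, hs⟩) hir hjs.symm
    (hnotMem i) (hnotMem j) hne
  exact hC.not_adj_getVert_succ hRC hi hj hq hadj

/-- Let `G` be 2-connected, `C` a longest cycle, `R` a component of `G - C`. If `x, y` are
distinct vertices of `C` with neighbours in `R` joined by a path with internal vertices in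
`R`, then their successors on `C` are nonadjacent; in particular `(N_C(R))⁺` is stable. -/
theorem stmt11 {V : Type*} [Fintype V] (G : SimpleGraph V) (hG : TwoConnected G)
    (v0 : V) (p : G.Walk v0 v0) (hC : IsLongestCycle G p) (R : Set V)
    (hR : IsCompOutside G {x | x ∈ p.support} R) :
    (∀ i j : ℕ, i < p.length → j < p.length → p.getVert i ≠ p.getVert j →
      (∃ r ∈ R, G.Adj (p.getVert i) r) → (∃ r ∈ R, G.Adj (p.getVert j) r) →
      ∀ (P : G.Walk (p.getVert i) (p.getVert j)), P.IsPath → 2 ≤ P.length →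
        (∀ w ∈ P.support, w ≠ p.getVert i → w ≠ p.getVert j → w ∈ R) →
        ¬ G.Adj (p.getVert (i + 1)) (p.getVert (j + 1))) ∧
    (∀ i j : ℕ, i < p.length → j < p.length →
      (∃ r ∈ R, G.Adj (p.getVert i) r) → (∃ r ∈ R, G.Adj (p.getVert j) r) →
      ¬ G.Adj (p.getVert (i + 1)) (p.getVert (j + 1))) := by
  obtain ⟨hpath, hstable⟩ := stmt11_general G v0 p hC R hR.2.1 hR.2.2.1.preconnected
  exact ⟨fun i j hi hj _ _ _ ↦ hpath i j hi hj, hstable⟩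
end

section
/- Let G be a 2-connected non-Hamiltonian graph on n vertices, C a longest cycle in G of even length c, and suppose there is an isolated vertex u of G - C with exactly c/2 neighbors on C. Then G is a subgraph of W_{n, c/2, c}. -/
open SimpleGraph

/-!
Let `S` consist of `u` and the vertices of the longest cycle `C`, and let `A` be the set of
neighbours of `u` on `C`. Two consecutive vertices of `C` are not both in `A`, as `C` could be
lengthened through `u`; since `A` contains half of the vertices, `C` alternates between `A` and its
complement. By rerouting `C` through `u`, any two distinct `x, y ∈ S` are joined by a path inside
`S` of length at least `c - [x ∈ A] - [y ∈ A]`. Hence an ear of `S` from `x` to `y` has length at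
most `[x ∈ A] + [y ∈ A]`, for otherwise it closes up to a cycle longer than `C`.

As no vertex of `G` is a cut vertex, an edge inside `S` is an ear of length `1`, an edge leaving `S`
extends to an ear of length at least `2`, and an edge disjoint from `S` gives rise to an ear of
length at least `3`. By the bound on ears, every edge therefore meets `A`: the `c / 2` vertices of
`A` form a vertex cover, which is to say that `G` embeds in `W_{n, c / 2, c}`.
-/

section

variable {V : Type*} {G : SimpleGraph V}

/-- A walk enters `S` if it is a path whose last vertex is its only vertex in `S`. -/
structure Enters (S : Set V) {x y : V} (q : G.Walk x y) : Prop where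
  isPath : q.IsPath
  mem_iff : ∀ z ∈ q.support, z ∈ S ↔ z = y

/-- An (open) ear of the vertex set `S`: a path between two distinct vertices of `S` with no
interior vertex in `S`. -/
structure IsEar (S : Set V) {x y : V} (q : G.Walk x y) : Prop where
  isPath : q.IsPath
  ne : x ≠ y
  mem_iff : ∀ z ∈ q.support, z ∈ S ↔ z = x ∨ z = y

lemma exists_enters_of_walk {S : Set V} {x y : V} (q : G.Walk x y) (hy : y ∈ S) :
    ∃ w, ∃ r : G.Walk x w, Enters S r ∧ r.support ⊆ q.support := by
  classical
  suffices h : ∃ w, ∃ r : G.Walk x w, (∀ z ∈ r.support, z ∈ S ↔ z = w) ∧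
      r.support ⊆ q.support by
    obtain ⟨w, r, hr, hrq⟩ := h
    have hsub := r.support_bypass_subset_support
    exact ⟨w, r.bypass, ⟨r.bypass_isPath, fun z hz => hr z (hsub hz)⟩, List.Subset.trans hsub hrq⟩
  induction q with
  | nil => exact ⟨_, .nil, by simpa using hy, by simp⟩
  | @cons x _ _ h q ih =>
    by_cases hx : x ∈ S
    · exact ⟨x, .nil, by simpa using hx, by simp⟩
    · obtain ⟨w, r, hr, hrq⟩ := ih hy
      have hxw : x ≠ w := fun hxw => hx (hxw ▸ (hr w r.end_mem_support).2 rfl)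
      refine ⟨w, .cons h r, ?_, ?_⟩
      · simpa [hx, hxw] using hr
      · simpa using List.subset_cons_of_subset _ hrq

namespace Enters

variable {S : Set V} {x y z : V} {q : G.Walk y z}

lemma end_mem (hq : Enters S q) : z ∈ S :=
  (hq.mem_iff z q.end_mem_support).2 rfl

lemma length_pos (hq : Enters S q) (hy : y ∉ S) : 0 < q.length :=
  Walk.not_nil_iff_lt_length.1
    (Walk.not_nil_of_ne fun h => hy (h ▸ hq.end_mem))

lemma cons (hq : Enters S q) (hx : x ∉ S) (hxq : x ∉ q.support) (h : G.Adj x y) :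
    Enters S (.cons h q) where
  isPath := hq.isPath.cons hxq
  mem_iff := by
    have hxz : x ≠ z := fun hxz => hx (hxz ▸ hq.end_mem)
    simpa [hx, hxz] using hq.mem_iff

lemma isEar_cons (hq : Enters S q) (hx : x ∈ S) (hxz : x ≠ z) (h : G.Adj x y) :
    IsEar S (.cons h q) where
  isPath := hq.isPath.cons fun hxq => hxz ((hq.mem_iff x hxq).1 hx)
  ne := hxz
  mem_iff := by
    intro w hw
    rw [Walk.support_cons, List.mem_cons] at hw
    obtain rfl | hw := hw
    · simp [hx]
    · rw [hq.mem_iff w hw]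
      exact ⟨.inr, fun h => h.resolve_left fun hwx => hxz ((hq.mem_iff x (hwx ▸ hw)).1 hx)⟩

end Enters

lemma isEar_toWalk {S : Set V} {x y : V} (hx : x ∈ S) (hy : y ∈ S) (h : G.Adj x y) :
    IsEar S h.toWalk where
  isPath := .of_adj h
  ne := h.ne
  mem_iff := by simp [hx, hy]

section VertexDeletion

variable (hG : ∀ v, ((⊤ : G.Subgraph).deleteVerts {v}).coe.Preconnected)
include hG

lemma exists_walk_notMem_support {a x y : V} (hx : x ≠ a) (hy : y ≠ a) :
    ∃ q : G.Walk x y, a ∉ q.support := by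
  have hmem {z : V} (hz : z ≠ a) : z ∈ ((⊤ : G.Subgraph).deleteVerts {a}).verts := by simp [hz]
  obtain ⟨q⟩ := hG a ⟨x, hmem hx⟩ ⟨y, hmem hy⟩
  have ha : a ∉ (q.map (Subgraph.hom _)).support := by
    rw [Walk.support_map, List.mem_map]
    rintro ⟨⟨z, hz⟩, -, h⟩
    exact hz.2 h
  exact ⟨_, ha⟩

lemma exists_enters_notMem_support {S : Set V} (hS : S.Nontrivial) {a x : V} (hx : x ≠ a) :
    ∃ w, ∃ q : G.Walk x w, Enters S q ∧ a ∉ q.support := by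
  obtain ⟨y, hy, hya⟩ := hS.exists_ne a
  obtain ⟨q, hq⟩ := exists_walk_notMem_support hG hx hya
  obtain ⟨w, r, hr, hrq⟩ := exists_enters_of_walk q hy
  exact ⟨w, r, hr, fun ha => hq (hrq ha)⟩

lemma exists_isEar_of_adj_of_mem_of_notMem {S : Set V} (hS : S.Nontrivial) {x y : V} (hx : x ∈ S)
    (hy : y ∉ S) (h : G.Adj x y) : ∃ w, ∃ q : G.Walk x w, IsEar S q ∧ 2 ≤ q.length := by
  obtain ⟨w, q, hq, hxq⟩ := exists_enters_notMem_support hG hS h.ne'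
  have hxw : x ≠ w := fun hxw => hxq (hxw ▸ q.end_mem_support)
  have := hq.length_pos hy
  exact ⟨w, .cons h q, hq.isEar_cons hx hxw h, by rw [Walk.length_cons]; omega⟩

lemma exists_adj_of_adj_of_notMem {S : Set V} (hS : S.Nonempty) {x y : V} (hx : x ∉ S)
    (hy : y ∉ S) (h : G.Adj x y) :
    ∃ x' ∉ S, (∃ y' ∉ S, G.Adj x' y') ∧ ∃ w ∈ S, G.Adj x' w := by
  obtain ⟨w, hw⟩ := hS
  obtain ⟨q, -⟩ := exists_walk_notMem_support hG h.ne fun hwy => hy (hwy ▸ hw)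
  obtain ⟨d, -, ⟨hd, hd'⟩, hdS⟩ := q.exists_boundary_dart
    {z | z ∉ S ∧ ∃ y' ∉ S, G.Adj z y'} ⟨hx, y, hy, h⟩ fun hwS => hwS.1 hw
  have hsnd : d.snd ∈ S := by
    by_contra hsnd
    exact hdS ⟨hsnd, d.fst, hd, d.adj.symm⟩
  exact ⟨d.fst, hd, hd', d.snd, hsnd, d.adj⟩

lemma exists_isEar_of_adj_of_notMem {S : Set V} (hS : S.Nontrivial) {x y : V} (hx : x ∉ S)
    (hy : y ∉ S) (h : G.Adj x y) : ∃ w z, ∃ q : G.Walk w z, IsEar S q ∧ 3 ≤ q.length := by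
  obtain ⟨x, hx, ⟨y, hy, hxy⟩, w₁, hw₁, hxw₁⟩ :=
    exists_adj_of_adj_of_notMem hG hS.nonempty hx hy h
  obtain ⟨w₂, q, hq, hw₁q⟩ := exists_enters_notMem_support hG hS hxw₁.ne
  have hw₁₂ : w₁ ≠ w₂ := fun h => hw₁q (h ▸ q.end_mem_support)
  have hqpos := hq.length_pos hx
  by_cases hq2 : 2 ≤ q.length
  · exact ⟨w₁, w₂, .cons hxw₁.symm q, hq.isEar_cons hw₁ hw₁₂ _, by
      rw [Walk.length_cons]; omega⟩
  -- Now `x` has two neighbours in `S`, one of which is not the end `w₃` of the path from `y`.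
  have hxw₂ : G.Adj x w₂ := Walk.adj_of_length_eq_one (p := q) (by omega)
  obtain ⟨w₃, r, hr, hxr⟩ := exists_enters_notMem_support hG hS hxy.ne'
  have hrpos := hr.length_pos hy
  obtain ⟨w, hw, hxw, hww₃⟩ : ∃ w ∈ S, G.Adj x w ∧ w ≠ w₃ := by
    by_cases h : w₁ = w₃
    · exact ⟨w₂, hq.end_mem, hxw₂, fun h' => hw₁₂ (h.trans h'.symm)⟩
    · exact ⟨w₁, hw₁, hxw₁, h⟩
  exact ⟨w, w₃, _, (hr.cons hx hxr hxy).isEar_cons hw hww₃ hxw.symm, by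
    simp only [Walk.length_cons]; omega⟩

lemma isVertexCover_of_forall_isEar_length_le {S A : Set V} (hS : S.Nontrivial)
    (hear : ∀ ⦃x y : V⦄ (q : G.Walk x y), IsEar S q →
      q.length ≤ A.indicator 1 x + A.indicator 1 y) : G.IsVertexCover A := by
  have hle (x : V) : A.indicator 1 x ≤ 1 := Set.indicator_le_self' (by simp) x
  have hmem {x y : V} (hx : x ∈ S) (hy : y ∉ S) (h : G.Adj x y) : x ∈ A := by
    obtain ⟨w, q, hq, hlen⟩ := exists_isEar_of_adj_of_mem_of_notMem hG hS hx hy h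
    have := hle w
    by_contra hxA
    have hbound := hear q hq
    rw [Set.indicator_of_notMem hxA] at hbound
    omega
  intro x y h
  by_cases hx : x ∈ S <;> by_cases hy : y ∈ S
  · by_contra! hA
    simpa [hA.1, hA.2] using hear _ (isEar_toWalk hx hy h)
  · exact .inl (hmem hx hy h)
  · exact .inr (hmem hy hx h.symm)
  · obtain ⟨w, z, q, hq, hlen⟩ := exists_isEar_of_adj_of_notMem hG hS hx hy h
    have := hear q hq
    have := hle w
    have := hle z
    omega

end VertexDeletion

/-- The walk `p` alternates between `A` and its complement: each step enters or leaves `A`. -/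
def Alternates (A : Set V) {x y : V} (p : G.Walk x y) : Prop :=
  ∀ d ∈ p.darts, d.fst ∈ A ↔ d.snd ∉ A

lemma alternates_cons_iff {A : Set V} {x y z : V} {h : G.Adj x y} {p : G.Walk y z} :
    Alternates A (.cons h p) ↔ (x ∈ A ↔ y ∉ A) ∧ Alternates A p := by
  simp [Alternates]

lemma alternates_append_iff {A : Set V} {x y z : V} {p : G.Walk x y} {q : G.Walk y z} :
    Alternates A (p.append q) ↔ Alternates A p ∧ Alternates A q := by
  simp [Alternates, or_imp, forall_and]

lemma Alternates.rotate [DecidableEq V] {A : Set V} {x y : V} {p : G.Walk x x}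
    (hp : Alternates A p) (hy : y ∈ p.support) : Alternates A (p.rotate y hy) :=
  fun d hd => hp d ((p.rotate_darts y hy).mem_iff.1 hd)

lemma Alternates.exists_suffix {A : Set V} {x y : V} {p : G.Walk x y}
    (hp : Alternates A p) (hlen : A.indicator 1 x < p.length) :
    ∃ a ∈ A, ∃ q : G.Walk a y, q.support <:+ p.support.tail ∧
      p.length = q.length + 1 + A.indicator 1 x := by
  cases p with
  | nil => simp at hlen
  | @cons _ b _ h p =>
    rw [alternates_cons_iff] at hp
    by_cases hx : x ∈ A
    · cases p with
      | nil => simp [hx] at hlen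
      | @cons _ a _ h' q =>
        rw [alternates_cons_iff] at hp
        have ha : a ∈ A := by
          by_contra ha
          exact hp.1.1 hx (hp.2.1.2 ha)
        exact ⟨a, ha, q, by simp, by simp [hx]⟩
    · have hb : b ∈ A := by
        by_contra hb
        exact hx (hp.1.2 hb)
      exact ⟨b, hb, p, by simp, by simp [hx]⟩

lemma ncard_eq_countP_mem {A : Set V} [DecidablePred (· ∈ A)] {l : List V} (hl : l.Nodup)
    (hA : ∀ a ∈ A, a ∈ l) : A.ncard = l.countP (· ∈ A) := by
  classical
  rw [List.countP_eq_length_filter, ← List.toFinset_card_of_nodup (hl.filter _),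
    ← Set.ncard_coe_finset]
  congr 1
  ext a
  simpa using hA a

lemma or_of_length_le_countP_add_countP {α : Type*} {P Q : α → Prop} [DecidablePred P]
    [DecidablePred Q] {l : List α} (hPQ : ∀ a ∈ l, ¬(P a ∧ Q a))
    (hl : l.length ≤ l.countP P + l.countP Q) : ∀ a ∈ l, P a ∨ Q a := by
  have hadd : l.countP (fun a => P a ∨ Q a) = l.countP P + l.countP Q := by
    clear hl
    induction l with
    | nil => simp
    | cons a l ih => grind
  simpa using List.countP_eq_length.1 (List.countP_le_length.antisymm (hl.trans hadd.ge))

lemma alternates_of_isCycle {A : Set V} {x : V} {p : G.Walk x x} (hp : p.IsCycle)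
    (hA : ∀ a ∈ A, a ∈ p.support) (hcard : p.length ≤ 2 * A.ncard)
    (hind : ∀ d ∈ p.darts, ¬(d.fst ∈ A ∧ d.snd ∈ A)) : Alternates A p := by
  classical
  have hA' : ∀ a ∈ A, a ∈ p.support.tail := by
    intro a ha
    obtain rfl | h := (p.mem_support_iff).1 (hA a ha)
    · exact Walk.end_mem_tail_support hp.not_nil
    · exact h
  have hsnd : A.ncard = p.darts.countP (·.snd ∈ A) := by
    rw [ncard_eq_countP_mem hp.support_nodup hA', ← p.map_snd_darts, List.countP_map]
    rfl
  have hfst : A.ncard = p.darts.countP (·.fst ∈ A) := by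
    rw [ncard_eq_countP_mem hp.support_nodup hA',
      p.tail_support_perm_dropLast_support.countP_eq, ← p.map_fst_darts, List.countP_map]
    rfl
  have hor := or_of_length_le_countP_add_countP hind (by rw [p.length_darts]; omega)
  intro d hd
  have := hind d hd
  have := hor d hd
  tauto

section Cycle

lemma exists_isPath_of_mem_darts {x : V} {p : G.Walk x x} (hp : p.IsCycle) {d : G.Dart}
    (hd : d ∈ p.darts) : ∃ q : G.Walk d.snd d.fst,
      q.IsPath ∧ q.support ⊆ p.support ∧ q.length + 1 = p.length := by
  obtain ⟨r, s, rfl⟩ := (p.isSubwalk_toWalk_adj_iff_mem_darts (d := d)).2 hd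
  refine ⟨s.append r, .mk' ?_, ?_, ?_⟩
  · have hnodup := hp.support_nodup
    simp only [Walk.support_append, Walk.support_cons, Walk.support_nil, List.tail_cons,
      List.append_assoc, List.singleton_append] at hnodup ⊢
    rw [← r.cons_tail_support, List.cons_append, List.tail_cons, s.cons_tail_support] at hnodup
    exact List.nodup_append_comm.1 hnodup
  · intro z
    simp only [Walk.mem_support_append_iff]
    tauto
  · simp only [Walk.length_append, Walk.length_cons, Walk.length_nil]
    omega

lemma start_notMem_support_tail {x y : V} {q : G.Walk x y} (hq : q.IsPath) :
    x ∉ q.support.tail := by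
  have := hq.support_nodup
  rw [← q.cons_tail_support] at this
  exact this.notMem

lemma exists_isPath_through {a b u x y : V} {q : G.Walk a y} {r : G.Walk b x} (hq : q.IsPath)
    (hr : r.IsPath) (hrq : r.support.Disjoint q.support) (huq : u ∉ q.support)
    (hur : u ∉ r.support) (ha : G.Adj u a) (hb : G.Adj u b) :
    ∃ s : G.Walk x y, s.IsPath ∧ (∀ z ∈ s.support, z = u ∨ z ∈ q.support ∨ z ∈ r.support) ∧
      s.length = q.length + r.length + 2 := by
  refine ⟨r.reverse.append (.cons hb.symm (.cons ha q)), ?_, ?_, ?_⟩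
  · rw [Walk.isPath_def, Walk.support_append, Walk.support_cons, List.tail_cons]
    refine hr.reverse.support_nodup.append (hq.cons huq).support_nodup ?_
    simpa using ⟨hur, hrq⟩
  · simp only [Walk.mem_support_append_iff, Walk.support_reverse, List.mem_reverse,
      Walk.support_cons, List.mem_cons]
    rintro z (hz | rfl | rfl | hz)
    · exact .inr (.inr hz)
    · exact .inr (.inr r.start_mem_support)
    · exact .inl rfl
    · exact .inr (.inl hz)
  · simp only [Walk.length_append, Walk.length_cons, Walk.length_reverse]
    omega

variable {A : Set V} {u : V} (hA : ∀ a ∈ A, G.Adj u a)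
include hA

lemma exists_isPath_of_isCycle_append {x y : V} {q : G.Walk x y} {r : G.Walk y x} (hxy : x ≠ y)
    (hcyc : (q.append r).IsCycle) (halt : Alternates A (q.append r))
    (hu : u ∉ (q.append r).support) :
    ∃ s : G.Walk x y, s.IsPath ∧ (∀ z ∈ s.support, z = u ∨ z ∈ (q.append r).support) ∧
      (q.append r).length ≤ s.length + A.indicator 1 x + A.indicator 1 y := by
  have hq := hcyc.isPath_of_append_left (Walk.not_nil_of_ne hxy.symm)
  have hr := hcyc.isPath_of_append_right (Walk.not_nil_of_ne hxy)
  rw [alternates_append_iff] at halt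
  by_cases hqlen : A.indicator 1 x < q.length
  swap
  · refine ⟨r.reverse, hr.reverse, by simp +contextual, ?_⟩
    rw [Walk.length_append, Walk.length_reverse]
    omega
  by_cases hrlen : A.indicator 1 y < r.length
  swap
  · refine ⟨q, hq, by simp +contextual, ?_⟩
    rw [Walk.length_append]
    omega
  obtain ⟨a, ha, q', hq', hql⟩ := halt.1.exists_suffix hqlen
  obtain ⟨b, hb, r', hr', hrl⟩ := halt.2.exists_suffix hrlen
  have hqsub : q'.support ⊆ q.support := List.Subset.trans hq'.subset (List.tail_subset _)
  have hrsub : r'.support ⊆ r.support := List.Subset.trans hr'.subset (List.tail_subset _)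
  have hq'path : q'.IsPath := .mk' (hq'.sublist.nodup hq.support_nodup.tail)
  have hr'path : r'.IsPath := .mk' (hr'.sublist.nodup hr.support_nodup.tail)
  have hdisj : List.Disjoint r'.support q'.support := by
    have := hcyc.support_nodup
    rw [Walk.tail_support_append] at this
    exact fun z hzr hzq => List.disjoint_of_nodup_append this (hq'.subset hzq) (hr'.subset hzr)
  have huq : u ∉ q'.support := fun h => hu ((Walk.mem_support_append_iff _ _).2 (.inl (hqsub h)))
  have hur : u ∉ r'.support := fun h => hu ((Walk.mem_support_append_iff _ _).2 (.inr (hrsub h)))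
  obtain ⟨s, hs, hsub, hsl⟩ :=
    exists_isPath_through hq'path hr'path hdisj huq hur (hA a ha) (hA b hb)
  refine ⟨s, hs, fun z hz => ?_, ?_⟩
  · rw [Walk.mem_support_append_iff]
    exact (hsub z hz).imp_right (.imp (hqsub ·) (hrsub ·))
  · rw [Walk.length_append]
    omega

lemma exists_isPath_of_mem_support {v₀ y : V} {p : G.Walk v₀ v₀} (hp : p.IsCycle)
    (halt : Alternates A p) (hu : u ∉ p.support) (hy : y ∈ p.support) :
    ∃ s : G.Walk u y, s.IsPath ∧ (∀ z ∈ s.support, z = u ∨ z ∈ p.support) ∧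
      p.length = s.length + A.indicator 1 y := by
  classical
  have hlen : A.indicator 1 y < (p.rotate y hy).length := by
    have hle : A.indicator 1 y ≤ 1 := Set.indicator_le_self' (by simp) y
    have := hp.three_le_length
    rw [p.length_rotate]
    omega
  obtain ⟨a, ha, q, hq, hql⟩ := (halt.rotate hy).exists_suffix hlen
  have hqp : q.support ⊆ p.support := fun z hz =>
    (p.mem_support_rotate_iff y hy).1 (List.mem_of_mem_tail (hq.subset hz))
  have hqpath : q.IsPath := .mk' (hq.sublist.nodup (hp.rotate hy).support_nodup)
  refine ⟨.cons (hA a ha) q, hqpath.cons fun h => hu (hqp h), ?_, ?_⟩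
  · rw [Walk.support_cons]
    exact List.forall_mem_cons.2 ⟨.inl rfl, fun z hz => .inr (hqp hz)⟩
  · rwa [p.length_rotate] at hql

lemma exists_isPath_of_ne {v₀ x y : V} {p : G.Walk v₀ v₀} (hp : p.IsCycle)
    (halt : Alternates A p) (hu : u ∉ p.support) (hxy : x ≠ y) (hx : x = u ∨ x ∈ p.support)
    (hy : y = u ∨ y ∈ p.support) :
    ∃ s : G.Walk x y, s.IsPath ∧ (∀ z ∈ s.support, z = u ∨ z ∈ p.support) ∧
      p.length ≤ s.length + A.indicator 1 x + A.indicator 1 y := by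
  classical
  obtain rfl | hx := hx
  · obtain ⟨s, hs, hsp, hlen⟩ :=
      exists_isPath_of_mem_support hA hp halt hu (hy.resolve_left hxy.symm)
    exact ⟨s, hs, hsp, by omega⟩
  obtain rfl | hy := hy
  · obtain ⟨s, hs, hsp, hlen⟩ := exists_isPath_of_mem_support hA hp halt hu hx
    refine ⟨s.reverse, hs.reverse, by simpa using hsp, ?_⟩
    rw [s.length_reverse]
    omega
  have hy' : y ∈ (p.rotate x hx).support := (p.mem_support_rotate_iff x hx).2 hy
  have hsplit := (p.rotate x hx).take_spec hy'
  obtain ⟨s, hs, hsp, hlen⟩ := exists_isPath_of_isCycle_append hA hxy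
    (hsplit.symm ▸ hp.rotate hx) (hsplit.symm ▸ halt.rotate hx)
    (by rwa [hsplit, p.mem_support_rotate_iff])
  rw [hsplit, p.length_rotate] at hlen
  simp only [hsplit, p.mem_support_rotate_iff] at hsp
  exact ⟨s, hs, hsp, hlen⟩

end Cycle

namespace IsLongestCycle

variable {v₀ u : V} {p : G.Walk v₀ v₀}

lemma length_add_length_le_of_isEar (hp : IsLongestCycle G p) {S : Set V} {x y : V}
    {q : G.Walk x y} (hq : IsEar S q) {s : G.Walk y x} (hs : s.IsPath)
    (hsS : ∀ z ∈ s.support, z ∈ S) : q.length + s.length ≤ p.length := by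
  by_cases hlen : 1 < q.length ∨ 1 < s.length
  · have hdisj : q.support.tail.Disjoint s.support.tail := by
      intro z hzq hzs
      obtain rfl | rfl := (hq.mem_iff z (List.mem_of_mem_tail hzq)).1
        (hsS z (List.mem_of_mem_tail hzs))
      · exact start_notMem_support_tail hq.isPath hzq
      · exact start_notMem_support_tail hs hzs
    simpa using hp.2 x _ (hq.isPath.isCycle_append hs hdisj hlen)
  · have := hp.1.three_le_length
    omega

lemma not_adj_and_adj (hp : IsLongestCycle G p) (hu : u ∉ p.support) {d : G.Dart}
    (hd : d ∈ p.darts) : ¬(G.Adj u d.fst ∧ G.Adj u d.snd) := by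
  rintro ⟨hfst, hsnd⟩
  obtain ⟨s, hs, hsp, hlen⟩ := exists_isPath_of_mem_darts hp.1 hd
  have hear : IsEar {w | w ∈ p.support} (.cons hfst.symm hsnd.toWalk) :=
    { isPath := .cons (.of_adj hsnd) (by simp [d.adj.ne, hfst.ne'])
      ne := d.adj.ne
      mem_iff := by simp [hu, hfst.ne, hsnd.ne, p.dart_fst_mem_support_of_mem_darts hd,
        p.dart_snd_mem_support_of_mem_darts hd] }
  have := hp.length_add_length_le_of_isEar hear hs hsp
  simp only [Walk.length_cons, Walk.length_nil] at this
  omega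

lemma alternates (hp : IsLongestCycle G p) (hu : u ∉ p.support)
    (hdeg : p.length ≤ 2 * {w | w ∈ p.support ∧ G.Adj u w}.ncard) :
    Alternates {w | w ∈ p.support ∧ G.Adj u w} p :=
  alternates_of_isCycle hp.1 (fun _ ha => ha.1) hdeg fun _ hd h =>
    hp.not_adj_and_adj hu hd ⟨h.1.2, h.2.2⟩

lemma length_le_of_isEar (hp : IsLongestCycle G p) {A : Set V} (hA : ∀ a ∈ A, G.Adj u a)
    (halt : Alternates A p) (hu : u ∉ p.support) {x y : V} {q : G.Walk x y}
    (hq : IsEar (insert u {w | w ∈ p.support}) q) :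
    q.length ≤ A.indicator 1 x + A.indicator 1 y := by
  have hx := (hq.mem_iff x q.start_mem_support).2 (.inl rfl)
  have hy := (hq.mem_iff y q.end_mem_support).2 (.inr rfl)
  obtain ⟨s, hs, hsp, hlen⟩ := exists_isPath_of_ne hA hp.1 halt hu hq.ne.symm hy hx
  have := hp.length_add_length_le_of_isEar hq hs hsp
  omega

end IsLongestCycle

lemma exists_equiv_fin_lt_ncard [Fintype V] {n : ℕ} (hn : Fintype.card V = n) (A : Set V) :
    ∃ f : V ≃ Fin n, ∀ a ∈ A, (f a).val < A.ncard := by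
  classical
  let e : V ≃ Fin (Nat.card A + Nat.card ↥Aᶜ) := (Equiv.Set.sumCompl A).symm.trans
    (((Finite.equivFin A).sumCongr (Finite.equivFin ↥Aᶜ)).trans finSumFinEquiv)
  have hcard : Nat.card A + Nat.card ↥Aᶜ = n := by
    rw [← hn, Fintype.card_congr e, Fintype.card_fin]
  refine ⟨e.trans (finCongr hcard), fun a ha => ?_⟩
  have he : (e a).val = (Finite.equivFin A ⟨a, ha⟩).val := by
    simp only [e, Equiv.trans_apply, Equiv.Set.sumCompl_symm_apply_of_mem ha]
    rfl
  exact he.trans_lt (Fin.isLt _)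

lemma exists_injective_wgraph_adj [Fintype V] {n k : ℕ} (hn : Fintype.card V = n) {A : Set V}
    (hA : A.ncard = k) (hcover : G.IsVertexCover A) (c : ℕ) :
    ∃ f : V → Fin n, Function.Injective f ∧
      ∀ a b : V, G.Adj a b → (Wgraph n k c).Adj (f a) (f b) := by
  obtain ⟨f, hf⟩ := exists_equiv_fin_lt_ncard hn A
  refine ⟨f, f.injective, fun a b hab => ?_⟩
  rw [Wgraph, fromRel_adj]
  exact ⟨f.injective.ne hab.ne, .inl (.inr
    ((hcover hab).imp (fun ha => hA ▸ hf a ha) fun hb => hA ▸ hf b hb))⟩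

end

theorem stmt12_general {V : Type*} (G : SimpleGraph V)
    (hG : ∀ v, ((⊤ : G.Subgraph).deleteVerts {v}).coe.Preconnected) (v0 : V) (p : G.Walk v0 v0)
    (hC : IsLongestCycle G p) (u : V) (hu : u ∉ p.support)
    (hdeg : p.length ≤ 2 * {w | w ∈ p.support ∧ G.Adj u w}.ncard) :
    G.IsVertexCover {w | w ∈ p.support ∧ G.Adj u w} := by
  have hS : (insert u {w | w ∈ p.support}).Nontrivial :=
    ⟨u, .inl rfl, v0, .inr p.start_mem_support, fun h => hu (h ▸ p.start_mem_support)⟩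
  exact isVertexCover_of_forall_isEar_length_le hG hS fun _ _ _ hq =>
    hC.length_le_of_isEar (fun _ ha => ha.2) (hC.alternates hu hdeg) hu hq

/-- Let `G` be a 2-connected non-Hamiltonian graph on `n` vertices, `C` a longest cycle of
even length `c`, and `u` an isolated vertex of `G - C` with exactly `c/2` neighbours on
`C`. Then `G` is a subgraph of `W_{n, c/2, c}`. -/
theorem stmt12 {V : Type*} [Fintype V] (G : SimpleGraph V) (n c : ℕ)
    (hn : Fintype.card V = n) (hG : TwoConnected G)
    (v0 : V) (p : G.Walk v0 v0) (hC : IsLongestCycle G p) (hc : p.length = c)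
    (heven : Even c) (hnonham : c < n)
    (u : V) (hu : u ∉ p.support) (huiso : ∀ w : V, G.Adj u w → w ∈ p.support)
    (hdeg : {w : V | w ∈ p.support ∧ G.Adj u w}.ncard = c / 2) :
    ∃ f : V → Fin n, Function.Injective f ∧
      ∀ a b : V, G.Adj a b → (Wgraph n (c / 2) c).Adj (f a) (f b) :=
  exists_injective_wgraph_adj hn hdeg
    (stmt12_general G (fun v => (hG.2 v).preconnected) v0 p hC u hu
      (by rw [hdeg, hc, Nat.two_mul_div_two_of_even heven])) c
end

section
/- Let G be a graph, C a cycle in G, and R a connected component of G - C with a vertex set disjoint from C. Suppose C is a longest cycle in G, T = {u_1,...,u_t} ⊆ N_C(R) is a strong attachment of R to C with t ≥ 2, and S = N_C(R) \ T with |S| = s. Then the length c of C satisfies c ≥ Σ_{i=1}^{t} d*_R(u_i, u_{i+1}) + 2s, where indices are cyclic and d*_R(x,y) is the maximum length of an (x,y)-path with all internal vertices in R. -/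
open SimpleGraph

/-- `u : Fin t → V` is a strong attachment of `R` to the cycle `p`: its values lie on the
cycle in cyclic order, and each (cyclically) consecutive pair `u i, u (i+1)` admits a pair
of independent edges into `R`. -/
def IsStrongAttachment {V : Type*} (G : SimpleGraph V) {v0 : V} (p : G.Walk v0 v0)
    (R : Set V) {t : ℕ} [NeZero t] (u : Fin t → V) : Prop :=
  (∃ idx : Fin t → ℕ, StrictMono idx ∧
      ∀ i : Fin t, idx i < p.length ∧ p.getVert (idx i) = u i) ∧
  ∀ i : Fin t, ∃ y z, y ∈ R ∧ z ∈ R ∧ G.Adj (u i) y ∧ G.Adj (u (i + 1)) z ∧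
    y ≠ z ∧ u i ≠ u (i + 1)

/-! Let `P` be a path from `x` to `y` through `R` and let `z` be a further vertex of `C` attached
to `R`. A path from `z` through `R` to its first vertex on `P` splits `P` into paths from `x` to `z`
and from `z` to `y` through `R`, whose lengths add up to at least two more than the length of `P`.
Since `C` is longest, an arc of `C` is at least as long as any path through `R` joining its ends.
Splitting an arc at its inner attached vertices one by one, each gains two. In terms of the
potential `m - 2 * #{attached positions before m}` the resulting bound says that the length of `P`
is at most the increase of the potential along the arc plus two, so the bounds for the `t` arcs
telescope around `C`. -/

section Links

/-- The outer boundary `N(R)` of a vertex set `R`: the vertices outside `R` with a neighbour in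
`R`. For a component `R` of `G - C` these are the vertices of `C` to which `R` is attached. -/
def outerBoundary {V : Type*} (G : SimpleGraph V) (R : Set V) : Set V :=
  {x | x ∉ R ∧ ∃ r ∈ R, G.Adj x r}

/-- `G` has an `(x, y)`-path of length `l` with all internal vertices in `R`; thus `d*_R(x, y)` is
the largest such `l`. -/
def HasLink {V : Type*} (G : SimpleGraph V) (R : Set V) (x y : V) (l : ℕ) : Prop :=
  ∃ P : G.Walk x y, P.IsPath ∧ P.length = l ∧ ∀ w ∈ P.support, w ≠ x → w ≠ y → w ∈ R

variable {V : Type*} {G : SimpleGraph V} {R : Set V} {x y z : V} {l : ℕ}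

theorem HasLink.symm (h : HasLink G R x y l) : HasLink G R y x l := by
  obtain ⟨P, hP, hl, hint⟩ := h
  exact ⟨P.reverse, hP.reverse, by rwa [Walk.length_reverse],
    fun w hw hy hx => hint w (by simpa using hw) hx hy⟩

theorem isPath_append {P : G.Walk x y} {Q : G.Walk y z} (hP : P.IsPath) (hQ : Q.IsPath)
    (h : ∀ w ∈ P.support, w ∈ Q.support → w = y) : (P.append Q).IsPath := by
  have hQ' := hQ.support_nodup
  rw [← Q.cons_tail_support, List.nodup_cons] at hQ'
  rw [Walk.isPath_def, Walk.support_append]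
  refine hP.support_nodup.append hQ'.2 fun w hwP hwQ => hQ'.1 ?_
  exact h w hwP (List.mem_of_mem_tail hwQ) ▸ hwQ

theorem exists_isPath_of_mem_outerBoundary (hR : (G.induce R).Preconnected)
    (hx : x ∈ outerBoundary G R) (hy : y ∈ R) :
    ∃ P : G.Walk x y, P.IsPath ∧ ∀ w ∈ P.support, w ≠ x → w ∈ R := by
  obtain ⟨hxR, r, hr, hxr⟩ := hx
  obtain ⟨Q, hQ⟩ := (hR ⟨r, hr⟩ ⟨y, hy⟩).exists_isPath
  let P : G.Walk r y := Q.map (Embedding.induce R).toHom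
  have hPR : ∀ w ∈ P.support, w ∈ R := by
    intro w hw
    obtain ⟨v, -, rfl⟩ := List.mem_map.1 (Walk.support_map (Embedding.induce R).toHom Q ▸ hw)
    exact v.2
  have hP : P.IsPath := hQ.map (Embedding.induce (G := G) R).injective
  refine ⟨Walk.cons hxr P, hP.cons fun hxP => hxR (hPR x hxP), fun w hw hwx => hPR w ?_⟩
  simpa [hwx] using hw

theorem exists_hasLink_two_le (hR : (G.induce R).Preconnected) (hx : x ∈ outerBoundary G R)
    (hy : y ∈ outerBoundary G R) (hxy : x ≠ y) : ∃ l, 2 ≤ l ∧ HasLink G R x y l := by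
  obtain ⟨hyR, r, hr, hyr⟩ := hy
  obtain ⟨P, hP, hPR⟩ := exists_isPath_of_mem_outerBoundary hR hx hr
  have hP0 : P.length ≠ 0 := fun h => hx.1 (Walk.eq_of_length_eq_zero h ▸ hr)
  refine ⟨P.length + 1, by omega, P.concat hyr.symm,
    hP.concat (fun hyP => hyR (hPR y hyP hxy.symm)) _, Walk.length_concat _ _, ?_⟩
  intro w hw hwx hwy
  refine hPR w ?_ hwx
  simpa [Walk.support_concat, hwy] using hw

theorem exists_isPath_first_meet (hR : (G.induce R).Preconnected)
    (hz : z ∈ outerBoundary G R) {S : Finset V} (hzS : z ∉ S) (hS : ∃ v ∈ S, v ∈ R) :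
    ∃ v ∈ S, v ∈ R ∧ ∃ Q : G.Walk z v, Q.IsPath ∧ (∀ w ∈ Q.support, w ≠ z → w ∈ R) ∧
      ∀ w ∈ S, w ∈ Q.support → w = v := by
  classical
  obtain ⟨v₁, hv₁S, hv₁R⟩ := hS
  obtain ⟨W, hW, hWR⟩ := exists_isPath_of_mem_outerBoundary hR hz hv₁R
  obtain ⟨v, hvS, hvW, hfirst⟩ :=
    W.exists_mem_support_forall_mem_support_imp_eq S ⟨v₁, by simpa using hv₁S⟩
  exact ⟨v, hvS, hWR v hvW (ne_of_mem_of_not_mem hvS hzS), W.takeUntil v hvW, hW.takeUntil hvW,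
    fun w hw => hWR w (W.support_takeUntil_subset_support hvW hw), hfirst⟩

theorem hasLink_of_meet {v : V} {P : G.Walk x v} {Q : G.Walk z v} (hP : P.IsPath) (hQ : Q.IsPath)
    (hPR : ∀ w ∈ P.support, w ≠ x → w ∈ R) (hQR : ∀ w ∈ Q.support, w ≠ z → w ∈ R)
    (hPQ : ∀ w ∈ P.support, w ∈ Q.support → w = v) : HasLink G R x z (P.length + Q.length) := by
  refine ⟨P.append Q.reverse, isPath_append hP hQ.reverse fun w hwP hwQ => hPQ w hwP ?_, ?_, ?_⟩
  · simpa using hwQ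
  · rw [Walk.length_append, Walk.length_reverse]
  · intro w hw hwx hwz
    rcases (Walk.mem_support_append_iff ..).1 hw with hw | hw
    · exact hPR w hw hwx
    · exact hQR w (by simpa using hw) hwz

/- A path from `z` through `R` first meets the link at an internal vertex. Going on from there to
either end gives the two new links, which together use each edge of the old one once and the detour,
of length at least one, twice. -/
theorem HasLink.exists_split_of_two_le (hR : (G.induce R).Preconnected)
    (h : HasLink G R x y l) (hl : 2 ≤ l) (hx : x ∉ R) (hy : y ∉ R)
    (hz : z ∈ outerBoundary G R) (hzx : z ≠ x) (hzy : z ≠ y) :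
    ∃ l₁ l₂, l + 2 ≤ l₁ + l₂ ∧ HasLink G R x z l₁ ∧ HasLink G R z y l₂ := by
  classical
  obtain ⟨P, hP, rfl, hint⟩ := h
  have hzP : z ∉ P.support := fun hz' => hz.1 (hint z hz' hzx hzy)
  have hsnd : P.getVert 1 ∈ R := by
    refine hint _ (P.getVert_mem_support 1) (fun h1 => ?_) fun h1 => ?_
    · have := (hP.getVert_eq_start_iff (by omega)).1 h1
      omega
    · have := (hP.getVert_eq_end_iff (by omega)).1 h1
      omega
  obtain ⟨v, hvP, hvR, Q, hQ, hQR, hfirst⟩ := exists_isPath_first_meet hR hz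
    (S := P.support.toFinset) (by simpa using hzP) ⟨P.getVert 1, by simp, hsnd⟩
  simp only [List.mem_toFinset] at hvP hfirst
  have hQ0 : Q.length ≠ 0 := fun h0 => hzP (Walk.eq_of_length_eq_zero h0 ▸ hvP)
  obtain ⟨A, B, hA, hB, rfl⟩ := hP.mem_support_iff_exists_append.1 hvP
  have hAR : ∀ w ∈ A.support, w ≠ x → w ∈ R := fun w hw hwx =>
    hint w ((Walk.mem_support_append_iff ..).2 (Or.inl hw)) hwx
      (hP.ne_of_mem_support_of_append (ne_of_mem_of_not_mem hvR hy).symm hw B.end_mem_support)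
  have hBR : ∀ w ∈ B.reverse.support, w ≠ y → w ∈ R := fun w hw hwy => by
    rw [Walk.support_reverse, List.mem_reverse] at hw
    refine hint w ((Walk.mem_support_append_iff ..).2 (Or.inr hw)) ?_ hwy
    rintro rfl
    exact hP.ne_of_mem_support_of_append (ne_of_mem_of_not_mem hvR hx).symm A.start_mem_support hw
      rfl
  refine ⟨A.length + Q.length, B.reverse.length + Q.length, ?_,
    hasLink_of_meet hA hQ hAR hQR fun w hw => hfirst w ?_,
    (hasLink_of_meet hB.reverse hQ hBR hQR fun w hw => hfirst w ?_).symm⟩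
  · rw [Walk.length_append, Walk.length_reverse]
    omega
  · exact (Walk.mem_support_append_iff ..).2 (Or.inl hw)
  · exact (Walk.mem_support_append_iff ..).2 (Or.inr (by simpa using hw))

theorem HasLink.exists_split (hR : (G.induce R).Preconnected) (h : HasLink G R x y l)
    (hx : x ∈ outerBoundary G R) (hy : y ∈ outerBoundary G R) (hz : z ∈ outerBoundary G R)
    (hzx : z ≠ x) (hzy : z ≠ y) :
    ∃ l₁ l₂, l + 2 ≤ l₁ + l₂ ∧ HasLink G R x z l₁ ∧ HasLink G R z y l₂ := by
  rcases le_or_gt 2 l with hl | hl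
  · exact h.exists_split_of_two_le hR hl hx.1 hy.1 hz hzx hzy
  · obtain ⟨l₁, hl₁, h₁⟩ := exists_hasLink_two_le hR hx hz hzx.symm
    obtain ⟨l₂, hl₂, h₂⟩ := exists_hasLink_two_le hR hz hy hzy
    exact ⟨l₁, l₂, by omega, h₁, h₂⟩

end Links

section Cycles

theorem count_le_count_add_one (N : ℕ → Prop) [DecidablePred N] {i j : ℕ}
    (h : ∀ m, i < m → m < j → ¬ N m) : Nat.count N j ≤ Nat.count N i + 1 := by
  rw [Nat.count_eq_card_filter_range, Nat.count_eq_card_filter_range]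
  refine (Finset.card_le_card fun m hm => ?_).trans (Finset.card_insert_le i _)
  simp only [Finset.mem_filter, Finset.mem_range, Finset.mem_insert] at hm ⊢
  have := h m
  grind

variable {V : Type*} {G : SimpleGraph V}

theorem isCycle_append_comm {u v : V} {p : G.Walk u v} {q : G.Walk v u} :
    (p.append q).IsCycle ↔ (q.append p).IsCycle := by
  have hnil : p.append q = Walk.nil ↔ q.append p = Walk.nil := by
    simp only [Walk.eq_nil_iff_nil, ← Walk.length_eq_zero_iff, Walk.length_append, Nat.add_comm]
  rw [Walk.isCycle_def, Walk.isCycle_def, Walk.isTrail_def, Walk.isTrail_def, Walk.edges_append,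
    Walk.edges_append, Walk.tail_support_append, Walk.tail_support_append, List.nodup_append_comm,
    List.nodup_append_comm (l₁ := p.support.tail), ne_eq, ne_eq, hnil]

theorem exists_isCycle_rotation {v : V} {p : G.Walk v v} (hp : p.IsCycle) (k : ℕ) :
    ∃ q : G.Walk (p.getVert k) (p.getVert k), q.IsCycle ∧ q.length = p.length ∧
      (∀ x, x ∈ q.support ↔ x ∈ p.support) ∧
      ∀ m ≤ p.length - k, q.getVert m = p.getVert (k + m) := by
  refine ⟨(p.drop k).append (p.take k), ?_, ?_, ?_, ?_⟩
  · rwa [isCycle_append_comm, Walk.append_take_drop_eq]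
  · rw [Walk.length_append, Nat.add_comm, ← Walk.length_append, Walk.append_take_drop_eq]
  · intro x
    conv_rhs => rw [← p.append_take_drop_eq k]
    simp only [Walk.mem_support_append_iff, or_comm]
  · intro m hm
    rw [Walk.getVert_append', if_pos (by simpa using hm), Walk.drop_getVert]

theorem exists_isPath_complement_arc {v : V} {p : G.Walk v v} (hp : p.IsCycle) {i j : ℕ}
    (hij : i < j) (hj : j ≤ p.length) :
    ∃ W : G.Walk (p.getVert j) (p.getVert i), W.IsPath ∧ W.support ⊆ p.support ∧
      W.length + (j - i) = p.length := by
  obtain ⟨q, hq, hlen, hsupp, hget⟩ := exists_isCycle_rotation hp i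
  have hqj : q.getVert (j - i) = p.getVert j := by
    rw [hget _ (by omega), Nat.add_sub_cancel' hij.le]
  rw [← hqj]
  refine ⟨q.drop (j - i), ?_, fun x hx => (hsupp x).1 ?_, ?_⟩
  · rw [← q.append_take_drop_eq (j - i)] at hq
    refine hq.isPath_of_append_right ?_
    rw [← Walk.length_eq_zero_iff, Walk.take_length]
    omega
  · exact (q.isSubwalk_drop _).support_subset hx
  · rw [Walk.drop_length]
    omega

variable {R : Set V} {v₀ : V} {p : G.Walk v₀ v₀} {x y : V} {i j l : ℕ}

theorem HasLink.add_length_le (hC : IsLongestCycle G p) (h : HasLink G R x y l) (hl : 2 ≤ l)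
    {W : G.Walk y x} (hW : W.IsPath) (hWR : ∀ w ∈ W.support, w ∉ R) :
    l + W.length ≤ p.length := by
  obtain ⟨P, hP, rfl, hint⟩ := h
  rw [← Walk.length_append]
  refine hC.2 _ _ (hP.isCycle_append hW (fun w hwP hwW => ?_) (Or.inl hl))
  have hP' := hP.support_nodup
  have hW' := hW.support_nodup
  rw [← P.cons_tail_support, List.nodup_cons] at hP'
  rw [← W.cons_tail_support, List.nodup_cons] at hW'
  refine hWR w (List.mem_of_mem_tail hwW) (hint w (List.mem_of_mem_tail hwP) ?_ ?_)
  · rintro rfl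
    exact hP'.1 hwP
  · rintro rfl
    exact hW'.1 hwW

theorem HasLink.le_sub (hC : IsLongestCycle G p) (hRp : Disjoint R {x | x ∈ p.support})
    (hij : i < j) (hj : j ≤ p.length) (h : HasLink G R (p.getVert i) (p.getVert j) l) :
    l ≤ j - i := by
  rcases le_or_gt 2 l with hl | hl
  · obtain ⟨W, hW, hWp, hlen⟩ := exists_isPath_complement_arc hC.1 hij hj
    have := h.add_length_le hC hl hW fun w hw hwR => Set.disjoint_left.1 hRp hwR (hWp hw)
    omega
  · omega

variable [DecidablePred fun m => p.getVert m ∈ outerBoundary G R]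

theorem HasLink.add_two_mul_count_le (hC : IsLongestCycle G p)
    (hRp : Disjoint R {x | x ∈ p.support}) (hR : (G.induce R).Preconnected)
    (hij : i < j) (hj : j ≤ p.length) (hiR : p.getVert i ∈ outerBoundary G R)
    (hjR : p.getVert j ∈ outerBoundary G R) (h : HasLink G R (p.getVert i) (p.getVert j) l) :
    l + i + 2 * Nat.count (fun m => p.getVert m ∈ outerBoundary G R) j ≤
      j + 2 + 2 * Nat.count (fun m => p.getVert m ∈ outerBoundary G R) i := by
  induction hn : j - i using Nat.strong_induction_on generalizing i j l with
  | _ n ih =>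
    by_cases hm : ∃ m, i < m ∧ m < j ∧ p.getVert m ∈ outerBoundary G R
    · obtain ⟨m, him, hmj, hmR⟩ := hm
      have hmi : p.getVert m ≠ p.getVert i := fun he => him.ne' <|
        hC.1.getVert_injOn' (show m ≤ p.length - 1 by omega) (show i ≤ p.length - 1 by omega) he
      have hmj' : p.getVert m ≠ p.getVert j := fun he => hmj.ne <|
        hC.1.getVert_injOn (show 1 ≤ m ∧ m ≤ p.length by omega)
          (show 1 ≤ j ∧ j ≤ p.length by omega) he
      obtain ⟨l₁, l₂, hl, h₁, h₂⟩ := h.exists_split hR hiR hjR hmR hmi hmj'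
      have := ih (m - i) (by omega) him (by omega) hiR hmR h₁ rfl
      have := ih (j - m) (by omega) hmj hj hmR hjR h₂ rfl
      omega
    · push Not at hm
      have := h.le_sub hC hRp hij hj
      have := count_le_count_add_one (fun m => p.getVert m ∈ outerBoundary G R) hm
      omega

theorem sum_add_two_mul_count_le (hC : IsLongestCycle G p)
    (hRp : Disjoint R {x | x ∈ p.support}) (hR : (G.induce R).Preconnected) {k : ℕ}
    {a : Fin (k + 1) → ℕ} (ha : StrictMono a) (hle : ∀ i, a i ≤ p.length)
    (haR : ∀ i, p.getVert (a i) ∈ outerBoundary G R) {d : Fin k → ℕ}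
    (hd : ∀ i : Fin k, HasLink G R (p.getVert (a i.castSucc)) (p.getVert (a i.succ)) (d i)) :
    ∑ i, d i + a 0 + 2 * Nat.count (fun m => p.getVert m ∈ outerBoundary G R) (a (Fin.last k)) ≤
      a (Fin.last k) + 2 * k + 2 * Nat.count (fun m => p.getVert m ∈ outerBoundary G R) (a 0) := by
  set c := Nat.count fun m => p.getVert m ∈ outerBoundary G R
  have harcs : ∑ i : Fin k, (d i + a i.castSucc + 2 * c (a i.succ)) ≤
      ∑ i : Fin k, (a i.succ + 2 + 2 * c (a i.castSucc)) := Finset.sum_le_sum fun i _ =>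
    (hd i).add_two_mul_count_le hC hRp hR (ha i.castSucc_lt_succ) (hle _) (haR _) (haR _)
  have ha_telescope := (Fin.sum_univ_castSucc a).symm.trans (Fin.sum_univ_succ a)
  have hc_telescope := (Fin.sum_univ_castSucc fun i => c (a i)).symm.trans
    (Fin.sum_univ_succ fun i => c (a i))
  simp only [Finset.sum_add_distrib, ← Finset.mul_sum, Finset.sum_const, Finset.card_univ,
    Fintype.card_fin, smul_eq_mul] at harcs
  omega

theorem ncard_support_inter_le_count (hp : p.length ≠ 0) (S : Set V)
    [DecidablePred fun m => p.getVert m ∈ S] :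
    ({x | x ∈ p.support} ∩ S).ncard ≤ Nat.count (fun m => p.getVert m ∈ S) p.length := by
  classical
  rw [Nat.count_eq_card_filter_range]
  refine le_trans ?_ (Finset.card_image_le (f := p.getVert))
  rw [← Set.ncard_coe_finset]
  refine Set.ncard_le_ncard ?_ (Finset.finite_toSet _)
  rintro x ⟨hx, hxS⟩
  obtain ⟨m, rfl, hm⟩ := Walk.mem_support_iff_exists_getVert.1 hx
  simp only [Finset.coe_image, Finset.coe_filter, Finset.mem_range]
  rcases hm.lt_or_eq with hm | rfl
  · exact ⟨m, ⟨hm, hxS⟩, rfl⟩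
  · rw [Walk.getVert_length] at hxS ⊢
    exact ⟨0, ⟨Nat.pos_of_ne_zero hp, by rwa [Walk.getVert_zero]⟩, Walk.getVert_zero _⟩

end Cycles

section CyclicOrder

variable {V : Type*} {G : SimpleGraph V} {R : Set V} {v₀ : V} {p : G.Walk v₀ v₀} {k : ℕ}
  {u : Fin (k + 1) → V} {d : Fin (k + 1) → ℕ}

theorem sum_add_two_mul_ncard_le_of_first_eq_zero (hC : IsLongestCycle G p)
    (hRp : Disjoint R {x | x ∈ p.support}) (hR : (G.induce R).Preconnected)
    {a : Fin (k + 1) → ℕ} (ha : StrictMono a) (ha0 : a 0 = 0)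
    (hau : ∀ i, a i < p.length ∧ p.getVert (a i) = u i) (huR : ∀ i, u i ∈ outerBoundary G R)
    (hd : ∀ i, HasLink G R (u i) (u (i + 1)) (d i)) :
    ∑ i, d i + 2 * ({x | x ∈ p.support} ∩ outerBoundary G R).ncard ≤
      p.length + 2 * (k + 1) := by
  classical
  let b : Fin (k + 2) → ℕ := Fin.snoc a p.length
  have hb_castSucc (i) : b i.castSucc = a i := Fin.snoc_castSucc ..
  have hb_last : b (Fin.last (k + 1)) = p.length := Fin.snoc_last ..
  have hb0 : b 0 = 0 := (hb_castSucc 0).trans ha0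
  have hbu (i : Fin (k + 1)) : p.getVert (b i.castSucc) = u i := by rw [hb_castSucc, (hau i).2]
  have hbu_last : p.getVert (b (Fin.last (k + 1))) = u 0 := by
    rw [hb_last, Walk.getVert_length, ← (hau 0).2, ha0, Walk.getVert_zero]
  have hbu_succ (i : Fin (k + 1)) : p.getVert (b i.succ) = u (i + 1) := by
    cases i using Fin.lastCases with
    | last => rw [Fin.succ_last, hbu_last, Fin.last_add_one]
    | cast i => rw [Fin.succ_castSucc, hbu, Fin.coeSucc_eq_succ]
  have hb : StrictMono b := Fin.strictMono_iff_lt_succ.2 fun i => by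
    cases i using Fin.lastCases with
    | last => rw [Fin.succ_last, hb_last, hb_castSucc]; exact (hau _).1
    | cast i => rw [Fin.succ_castSucc, hb_castSucc, hb_castSucc]; exact ha i.castSucc_lt_succ
  have hbR (i : Fin (k + 2)) : p.getVert (b i) ∈ outerBoundary G R := by
    cases i using Fin.lastCases with
    | last => exact hbu_last ▸ huR 0
    | cast i => exact hbu i ▸ huR i
  have hsum := sum_add_two_mul_count_le hC hRp hR hb
    (fun i => hb_last ▸ hb.monotone i.le_last) hbR (d := d) fun i => by
      rw [hbu, hbu_succ]
      exact hd i
  rw [hb_last, hb0, Nat.count_zero] at hsum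
  have := ncard_support_inter_le_count (p := p) (Nat.ne_zero_of_lt (hau 0).1) (outerBoundary G R)
  omega

theorem sum_add_two_mul_ncard_le (hC : IsLongestCycle G p)
    (hRp : Disjoint R {x | x ∈ p.support}) (hR : (G.induce R).Preconnected)
    {a : Fin (k + 1) → ℕ} (ha : StrictMono a)
    (hau : ∀ i, a i < p.length ∧ p.getVert (a i) = u i) (huR : ∀ i, u i ∈ outerBoundary G R)
    (hd : ∀ i, HasLink G R (u i) (u (i + 1)) (d i)) :
    ∑ i, d i + 2 * ({x | x ∈ p.support} ∩ outerBoundary G R).ncard ≤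
      p.length + 2 * (k + 1) := by
  obtain ⟨q, hq, hlen, hsupp, hget⟩ := exists_isCycle_rotation hC.1 (a 0)
  have ha0 (i) : a 0 ≤ a i := ha.monotone i.zero_le
  simp only [← hsupp, ← hlen] at hRp ⊢
  refine sum_add_two_mul_ncard_le_of_first_eq_zero ⟨hq, fun w r hr => hlen ▸ hC.2 w r hr⟩ hRp hR
    (a := fun i => a i - a 0) (fun i j hij => ?_) (Nat.sub_self _) (fun i => ?_) huR hd
  · exact Nat.sub_lt_sub_right (ha0 i) (ha hij)
  · obtain ⟨hlt, hu⟩ := hau i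
    rw [hget _ (by omega), Nat.add_sub_cancel' (ha0 i)]
    exact ⟨by omega, hu⟩

end CyclicOrder

theorem stmt13_general {V : Type*} {G : SimpleGraph V} {v₀ : V} {p : G.Walk v₀ v₀}
    (hC : IsLongestCycle G p) {R : Set V} (hRp : Disjoint R {x | x ∈ p.support})
    (hR : (G.induce R).Preconnected) {t : ℕ} [NeZero t] {u : Fin t → V}
    (hu : ∃ idx : Fin t → ℕ, StrictMono idx ∧
      ∀ i, idx i < p.length ∧ p.getVert (idx i) = u i)
    (huR : ∀ i, ∃ r ∈ R, G.Adj (u i) r) {d : Fin t → ℕ}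
    (hd : ∀ i, HasLink G R (u i) (u (i + 1)) (d i)) :
    ∑ i, d i + 2 * ({x | x ∈ p.support ∧ ∃ r ∈ R, G.Adj x r} \ Set.range u).ncard ≤
      p.length := by
  obtain ⟨k, rfl⟩ := Nat.exists_eq_add_one_of_ne_zero (NeZero.ne t)
  obtain ⟨a, ha, hau⟩ := hu
  have hinj : Function.Injective u := fun i j hij => ha.injective <| by
    obtain ⟨hi, hui⟩ := hau i
    obtain ⟨hj, huj⟩ := hau j
    exact hC.1.getVert_injOn' (show a i ≤ p.length - 1 by omega)
      (show a j ≤ p.length - 1 by omega) (by rw [hui, huj, hij])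
  have hattach : {x | x ∈ p.support ∧ ∃ r ∈ R, G.Adj x r} =
      {x | x ∈ p.support} ∩ outerBoundary G R := by
    ext x
    exact ⟨fun h => ⟨h.1, fun hx => Set.disjoint_left.1 hRp hx h.1, h.2⟩, fun h => ⟨h.1, h.2.2⟩⟩
  have hmem (i) : u i ∈ {x | x ∈ p.support} ∩ outerBoundary G R :=
    hattach ▸ ⟨(hau i).2 ▸ p.getVert_mem_support _, huR i⟩
  have hncard := Set.ncard_sdiff_add_ncard_of_subset (Set.range_subset_iff.2 hmem)
    (p.support.finite_toSet.inter_of_left _)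
  rw [Set.ncard_range_of_injective hinj, Nat.card_fin] at hncard
  have := sum_add_two_mul_ncard_le hC hRp hR ha hau (fun i => (hmem i).2) hd
  rw [hattach]
  omega

/-- Fan's lemma (iii): if `C` is a longest cycle, `T = {u_1,…,u_t}` (`t ≥ 2`) a strong
attachment of a component `R` of `G - C`, and `S = N_C(R) \ T` has size `s`, then
`c ≥ Σᵢ d*_R(u_i, u_{i+1}) + 2s`, where `d*_R` is the maximum length of a path with all
internal vertices in `R`. -/
theorem stmt13 {V : Type*} [Fintype V] (G : SimpleGraph V)
    (v0 : V) (p : G.Walk v0 v0) (hC : IsLongestCycle G p) (R : Set V)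
    (hR : IsCompOutside G {x | x ∈ p.support} R)
    (t : ℕ) [NeZero t] (ht : 2 ≤ t) (u : Fin t → V) (hinj : Function.Injective u)
    (hT : ∀ i : Fin t, u i ∈ p.support ∧ ∃ r ∈ R, G.Adj (u i) r)
    (hSA : IsStrongAttachment G p R u)
    (s : ℕ)
    (hs : ({x : V | x ∈ p.support ∧ ∃ r ∈ R, G.Adj x r} \ Set.range u).ncard = s)
    (d : Fin t → ℕ)
    (hd : ∀ i : Fin t, ∃ P : G.Walk (u i) (u (i + 1)), P.IsPath ∧ P.length = d i ∧
      ∀ w ∈ P.support, w ≠ u i → w ≠ u (i + 1) → w ∈ R) :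
    (∑ i : Fin t, d i) + 2 * s ≤ p.length := by
  subst hs
  exact stmt13_general hC hR.2.1 hR.2.2.1.preconnected hSA.1 (fun i => (hT i).2) hd
end

section
/- Let G be a 2-connected graph, C a locally maximal cycle of G of length |C|, R a component of G - C, and T a strong attachment of R to C with |T| = t. Suppose that for every pair x, x' ∈ T the longest (x,x')-path with all internal vertices in R has length at least d, where d ≥ 2. Then the clique number of the subgraph of G induced on V(C) is at most |C| - (d-1)(t-1). -/
open SimpleGraph

/-- An edge (of `Sym2 V`) crossing between `Cs` and its complement: it has an endpoint in
`Cs` and an endpoint outside `Cs`. -/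
def crossEdge {V : Type*} (Cs : Set V) (e : Sym2 V) : Prop :=
  (∃ a ∈ e, a ∈ Cs) ∧ (∃ b ∈ e, b ∉ Cs)

open Classical in
/-- The number of edges in the list `l` having exactly one endpoint in `Cs`. -/
noncomputable def crossCount {V : Type*} (Cs : Set V) (l : List (Sym2 V)) : ℕ :=
  l.countP (fun e => decide (crossEdge Cs e))

/-- The cycle `p` is locally maximal in `G`: there is no cycle `q` with `|E(q)| > |E(p)|`
using at most two edges with exactly one endpoint on `p`. -/
def IsLocallyMaximal {V : Type*} (G : SimpleGraph V) {v0 : V} (p : G.Walk v0 v0) : Prop :=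
  p.IsCycle ∧ ∀ (w : V) (q : G.Walk w w), q.IsCycle →
    ¬ (p.length < q.length ∧ crossCount {x | x ∈ p.support} q.edges ≤ 2)

/-! Let `C` be a locally maximal cycle of length `n`. A path outside `C` of length at least `d`
between two vertices of `T` closes up with any path on `C` between them, so the latter has length
at most `n - d`. In particular each of the `t` segments into which `T` cuts `C` has at least
`d - 1` interior vertices. Consider two of these segments that contain clique vertices, running
from `s` to `s'` and from `e` to `e'`, with first and last clique vertices `x`, `y` and `z`, `w`.
Walking from `e` back to `x`, jumping to `z` and walking on to `s` is a path on `C` missing only the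
gaps `(s, x)` and `(e, z)`, so these gaps contain at least `d - 1` vertices together. By symmetry so
do the gaps `(y, s')` and `(w, e')`. Hence the clique misses at least `d - 1` vertices of one of any
two segments, that is, of all segments but one. -/

section CrossCount

variable {V : Type*} {G : SimpleGraph V} {S : Set V} {a b : V}

theorem crossEdge_mk : crossEdge S s(a, b) ↔ (a ∈ S ∨ b ∈ S) ∧ (a ∉ S ∨ b ∉ S) := by
  simp [crossEdge]

theorem crossCount_cons_le (e : Sym2 V) (l : List (Sym2 V)) :
    crossCount S (e :: l) ≤ crossCount S l + 1 := by
  unfold crossCount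
  rw [List.countP_cons]
  split_ifs <;> omega

theorem crossCount_cons_of_not_crossEdge {e : Sym2 V} (he : ¬ crossEdge S e)
    (l : List (Sym2 V)) : crossCount S (e :: l) = crossCount S l := by
  simp [crossCount, he]

theorem crossCount_append (l m : List (Sym2 V)) :
    crossCount S (l ++ m) = crossCount S l + crossCount S m := by
  simp [crossCount]

theorem crossCount_edges_eq_zero_of_support_subset (q : G.Walk a b)
    (hq : ∀ w ∈ q.support, w ∈ S) : crossCount S q.edges = 0 := by
  induction q with
  | nil => simp [crossCount]
  | @cons a c b hac q ih =>
    have ha : a ∈ S := hq a (by simp)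
    have hc : c ∈ S := hq c (by simp)
    rw [Walk.edges_cons, crossCount_cons_of_not_crossEdge, ih fun w hw => hq w (by simp [hw])]
    rw [crossEdge_mk]
    tauto

theorem crossCount_edges_le_one_of_isPath (q : G.Walk a b) (hq : q.IsPath)
    (hout : ∀ w ∈ q.support, w ≠ b → w ∉ S) : crossCount S q.edges ≤ 1 := by
  induction q with
  | nil => simp [crossCount]
  | @cons a c b hac q ih =>
    rw [Walk.cons_isPath_iff] at hq
    rcases eq_or_ne c b with rfl | hcb
    · rw [Walk.edges_cons, Walk.edges_eq_nil.2 (Walk.isPath_iff_nil.1 hq.1)]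
      exact crossCount_cons_le _ _
    · have ha : a ∉ S := hout a (by simp) fun hab => hq.2 (hab ▸ q.end_mem_support)
      have hc : c ∉ S := hout c (by simp) hcb
      rw [Walk.edges_cons, crossCount_cons_of_not_crossEdge]
      · exact ih hq.1 fun w hw => hout w (by simp [hw])
      · rw [crossEdge_mk]
        tauto

theorem crossCount_edges_le_two_of_isPath (q : G.Walk a b) (hq : q.IsPath)
    (hout : ∀ w ∈ q.support, w ≠ a → w ≠ b → w ∉ S) : crossCount S q.edges ≤ 2 := by
  cases q with
  | nil => simp [crossCount]
  | @cons a c b hac q =>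
    rw [Walk.cons_isPath_iff] at hq
    have htail : crossCount S q.edges ≤ 1 := crossCount_edges_le_one_of_isPath q hq.1
      fun w hw => hout w (by simp [hw]) fun hwa => hq.2 (hwa ▸ hw)
    calc crossCount S (s(a, c) :: q.edges) ≤ crossCount S q.edges + 1 := crossCount_cons_le _ _
      _ ≤ 2 := by omega

end CrossCount

section Paths

variable {V : Type*} {G : SimpleGraph V}

theorem isPath_append_of_disjoint {a b c : V} {P : G.Walk a b} {Q : G.Walk b c} (hP : P.IsPath)
    (hQ : Q.IsPath) (hPQ : P.support.Disjoint Q.support.tail) : (P.append Q).IsPath := by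
  rw [Walk.isPath_def, Walk.support_append, List.nodup_append']
  exact ⟨hP.support_nodup, hQ.support_nodup.tail, hPQ⟩

theorem start_notMem_tail_support_of_isPath {a b : V} {P : G.Walk a b} (hP : P.IsPath) :
    a ∉ P.support.tail := by
  have hnodup := hP.support_nodup
  rw [← Walk.cons_tail_support] at hnodup
  exact (List.nodup_cons.1 hnodup).1

theorem IsLocallyMaximal.length_add_length_le {v₀ : V} {p : G.Walk v₀ v₀}
    (hp : IsLocallyMaximal G p) {a b : V} {P : G.Walk a b} {Q : G.Walk b a} (hP : P.IsPath)
    (hlen : 2 ≤ P.length) (hout : ∀ w ∈ P.support, w ≠ a → w ≠ b → w ∉ p.support)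
    (hQ : Q.IsPath) (hin : ∀ w ∈ Q.support, w ∈ p.support) :
    P.length + Q.length ≤ p.length := by
  have hdisj : P.support.tail.Disjoint Q.support.tail := fun w hwP hwQ =>
    hout w (List.mem_of_mem_tail hwP)
      (fun h => start_notMem_tail_support_of_isPath hP (h ▸ hwP))
      (fun h => start_notMem_tail_support_of_isPath hQ (h ▸ hwQ))
      (hin w (List.mem_of_mem_tail hwQ))
  have hcycle : (P.append Q).IsCycle := hP.isCycle_append hQ hdisj (Or.inl hlen)
  have hcross : crossCount {x | x ∈ p.support} (P.append Q).edges ≤ 2 := by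
    have hQ0 : crossCount {x | x ∈ p.support} Q.edges = 0 :=
      crossCount_edges_eq_zero_of_support_subset Q hin
    rw [Walk.edges_append, crossCount_append, hQ0]
    exact crossCount_edges_le_two_of_isPath P hP hout
  by_contra! hlt
  exact hp.2 a _ hcycle ⟨by rwa [Walk.length_append], hcross⟩

end Paths

/-- Every path of `G` on the vertex set `S` joining two distinct vertices of `T` has length at most
`n - d`. If `S` is the vertex set of a locally maximal cycle of length `n`, this is what paths
outside `S` of length at least `d` between the vertices of `T` force. -/
def DetourBound {V : Type*} (G : SimpleGraph V) (S T : Set V) (n d : ℕ) : Prop :=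
  T.Pairwise fun a b =>
    ∀ q : G.Walk a b, q.IsPath → (∀ w ∈ q.support, w ∈ S) → q.length + d ≤ n

theorem IsLocallyMaximal.detourBound {V : Type*} {G : SimpleGraph V} {v₀ : V} {p : G.Walk v₀ v₀}
    (hp : IsLocallyMaximal G p) {T : Set V} {d : ℕ} (hd : 2 ≤ d)
    (hpaths : T.Pairwise fun a b => ∃ P : G.Walk a b, P.IsPath ∧ d ≤ P.length ∧
      ∀ w ∈ P.support, w ≠ a → w ≠ b → w ∉ p.support) :
    DetourBound G {x | x ∈ p.support} T p.length d := by
  intro a ha b hb hab q hq hqin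
  obtain ⟨P, hP, hdP, hout⟩ := hpaths hb ha hab.symm
  have := hp.length_add_length_le hP (hd.trans hdP) hout hq hqin
  omega

/-- `c` runs around a cycle of `G` of length `n` forever in both directions. Indexing the cycle by
`ℤ` makes its segments intervals and its two orientations interchangeable under negation. -/
structure IsCyclicParam {V : Type*} (G : SimpleGraph V) (n : ℕ) (c : ℤ → V) : Prop where
  pos : 0 < n
  adj (k : ℤ) : G.Adj (c k) (c (k + 1))
  eq_iff (k l : ℤ) : c k = c l ↔ k ≡ l [ZMOD n]

theorem exists_isCyclicParam_of_isCycle {V : Type*} {G : SimpleGraph V} {v₀ : V}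
    {p : G.Walk v₀ v₀} (hp : p.IsCycle) :
    ∃ c : ℤ → V, IsCyclicParam G p.length c ∧ Set.range c = {x | x ∈ p.support} := by
  have hpos : 0 < p.length := by have := hp.three_le_length; omega
  let c (k : ℤ) : V := p.getVert (k % p.length).toNat
  have map_modEq {k l : ℤ} (h : k ≡ l [ZMOD p.length]) : c k = c l :=
    congrArg (fun m : ℤ => p.getVert m.toNat) h
  have map_natCast {m : ℕ} (hm : m ≤ p.length) : c m = p.getVert m := by
    rcases hm.lt_or_eq with hm | rfl
    · simp only [c]
      rw [Int.emod_eq_of_lt (by omega) (by omega), Int.toNat_natCast]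
    · simp [c]
  have exists_modEq (k : ℤ) : ∃ m : ℕ, m < p.length ∧ k ≡ m [ZMOD p.length] := by
    have h0 := Int.emod_nonneg k (b := p.length) (by omega)
    have hlt := Int.emod_lt_of_pos k (b := p.length) (by omega)
    exact ⟨(k % p.length).toNat, by omega, by simp [Int.ModEq, Int.toNat_of_nonneg h0]⟩
  refine ⟨c, ⟨hpos, fun k => ?_, fun k l => ⟨fun h => ?_, map_modEq⟩⟩, Set.Subset.antisymm ?_ ?_⟩
  · obtain ⟨m, hm, hkm⟩ := exists_modEq k
    rw [map_modEq hkm, map_modEq (hkm.add_right 1), ← Nat.cast_succ, map_natCast hm.le,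
      map_natCast hm]
    exact p.adj_getVert_succ hm
  · obtain ⟨m, hm, hkm⟩ := exists_modEq k
    obtain ⟨m', hm', hlm'⟩ := exists_modEq l
    rw [map_modEq hkm, map_modEq hlm', map_natCast hm.le, map_natCast hm'.le] at h
    obtain rfl : m = m' := hp.getVert_injOn' (Nat.le_sub_one_of_lt hm) (Nat.le_sub_one_of_lt hm') h
    exact hkm.trans hlm'.symm
  · rintro _ ⟨k, rfl⟩
    exact p.getVert_mem_support _
  · intro w hw
    obtain ⟨m, rfl, hm⟩ := Walk.mem_support_iff_exists_getVert.1 hw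
    exact ⟨m, map_natCast hm⟩

namespace IsCyclicParam

variable {V : Type*} {G : SimpleGraph V} {n : ℕ} {c : ℤ → V} (hc : IsCyclicParam G n c)
include hc

theorem map_add_period (k : ℤ) : c (k + n) = c k := by
  simp [hc.eq_iff]

theorem neg : IsCyclicParam G n fun k => c (-k) where
  pos := hc.pos
  adj k := by simpa using (hc.adj (-(k + 1))).symm
  eq_iff k l := by rw [hc.eq_iff, Int.neg_modEq_neg]

theorem eq_of_lt_add {k l : ℤ} (h : c k = c l) (hkl : k < l + n) (hlk : l < k + n) : k = l := by
  have hdvd : (n : ℤ) ∣ l - k := ((hc.eq_iff k l).1 h).dvd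
  have := Int.eq_zero_of_abs_lt_dvd hdvd (abs_lt.2 ⟨by omega, by omega⟩)
  omega

theorem injOn_Ioo {a b : ℤ} (hba : b ≤ a + n) : Set.InjOn c (Set.Ioo a b) := by
  rintro k ⟨hk, hk'⟩ l ⟨hl, hl'⟩ h
  exact hc.eq_of_lt_add h (by omega) (by omega)

theorem exists_mem_Ico {v : V} (hv : v ∈ Set.range c) : ∃ k ∈ Finset.Ico (0 : ℤ) n, c k = v := by
  obtain ⟨l, rfl⟩ := hv
  have hn : (0 : ℤ) < n := by exact_mod_cast hc.pos
  exact ⟨l % n, Finset.mem_Ico.2 ⟨Int.emod_nonneg l hn.ne', Int.emod_lt_of_pos l hn⟩,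
    (hc.eq_iff _ _).2 (Int.mod_modEq l n)⟩

theorem exists_next_mem {T : Set V} {s : ℤ} (hs : c s ∈ T) :
    ∃ s', s < s' ∧ c s' ∈ T ∧ ∀ k, s < k → c k ∈ T → s' ≤ k := by
  have hwrap : s < s + n ∧ c (s + n) ∈ T :=
    ⟨by have := hc.pos; omega, by rwa [hc.map_add_period]⟩
  obtain ⟨s', ⟨hlt, hmem⟩, hleast⟩ := Int.exists_least_of_bdd (P := fun k => s < k ∧ c k ∈ T)
    ⟨s, fun k hk => hk.1.le⟩ ⟨_, hwrap⟩
  exact ⟨s', hlt, hmem, fun k hk hkT => hleast k ⟨hk, hkT⟩⟩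

theorem exists_isPath_arc {a b : ℤ} (hab : a ≤ b) (hba : b < a + n) :
    ∃ q : G.Walk (c a) (c b), q.IsPath ∧ (q.length : ℤ) = b - a ∧
      ∀ w ∈ q.support, ∃ k, a ≤ k ∧ k ≤ b ∧ c k = w := by
  induction b, hab using Int.leInduction with
  | base => exact ⟨.nil, by simp, by simp, fun w hw => ⟨a, by simp_all⟩⟩
  | succ b hab ih =>
    obtain ⟨q, hq, hlen, hsupp⟩ := ih (by omega)
    refine ⟨q.concat (hc.adj b), hq.concat (fun hmem => ?_) _, ?_, fun w hw => ?_⟩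
    · obtain ⟨k, hak, hkb, hk⟩ := hsupp _ hmem
      have := hc.eq_of_lt_add hk (by omega) (by omega)
      omega
    · rw [Walk.length_concat]
      omega
    · rw [Walk.support_concat, List.mem_append, List.mem_singleton] at hw
      rcases hw with hw | rfl
      · obtain ⟨k, hak, hkb, rfl⟩ := hsupp w hw
        exact ⟨k, hak, by omega, rfl⟩
      · exact ⟨b + 1, by omega, le_rfl, rfl⟩

theorem exists_isPath_chord {s x e y : ℤ} (hsx : s < x) (hxe : x ≤ e) (hey : e < y)
    (hys : y ≤ s + n) (hxy : G.Adj (c x) (c y)) :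
    ∃ q : G.Walk (c e) (c s), q.IsPath ∧ (q.length : ℤ) = (e - x) + 1 + (s + n - y) ∧
      ∀ w ∈ q.support, w ∈ Set.range c := by
  obtain ⟨q₁, hq₁, hlen₁, hsupp₁⟩ := hc.exists_isPath_arc hxe (by omega)
  obtain ⟨q₂, hq₂, hlen₂, hsupp₂⟩ := hc.exists_isPath_arc hys (by omega)
  have hdisj : q₁.support.Disjoint q₂.support := fun w hw₁ hw₂ => by
    obtain ⟨k, hxk, hke, rfl⟩ := hsupp₁ w hw₁
    obtain ⟨l, hyl, hls, hlk⟩ := hsupp₂ _ hw₂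
    have := hc.eq_of_lt_add hlk (by omega) (by omega)
    omega
  have hpath : (q₁.reverse.append (q₂.cons hxy)).IsPath :=
    isPath_append_of_disjoint hq₁.reverse (hq₂.cons (hdisj (Walk.start_mem_support _)))
      (by simpa using hdisj)
  refine ⟨(q₁.reverse.append (q₂.cons hxy)).copy rfl (hc.map_add_period s), by simpa, ?_, ?_⟩
  · simp only [Walk.length_copy, Walk.length_append, Walk.length_reverse, Walk.length_cons]
    omega
  · intro w hw
    simp only [Walk.support_copy, Walk.mem_support_append_iff, Walk.support_reverse,
      List.mem_reverse, Walk.support_cons, List.mem_cons] at hw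
    rcases hw with hw | rfl | hw
    · exact (hsupp₁ w hw).imp fun k hk => hk.2.2
    · exact ⟨x, rfl⟩
    · exact (hsupp₂ w hw).imp fun k hk => hk.2.2

section DetourBound

variable {T : Set V} {d : ℕ} (hT : DetourBound G (Set.range c) T n d)
include hT

theorem add_le_of_detourBound {a b : ℤ} (hab : a < b) (hba : b < a + n) (ha : c a ∈ T)
    (hb : c b ∈ T) : a + d ≤ b := by
  have hne : c b ≠ c (a + n) := fun h => hba.ne (hc.eq_of_lt_add h (by omega) (by omega))
  obtain ⟨q, hq, hlen, hsupp⟩ := hc.exists_isPath_arc hba.le (by omega)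
  have := hT hb (by rwa [hc.map_add_period]) hne q hq
    fun w hw => (hsupp w hw).imp fun k hk => hk.2.2
  omega

variable {K : Finset V} (hK : G.IsClique (K : Set V))
include hK

theorem add_one_le_of_chord {s x e y : ℤ} (hsx : s < x) (hxe : x ≤ e) (hey : e < y)
    (hys : y ≤ s + n) (hs : c s ∈ T) (he : c e ∈ T) (hx : c x ∈ K) (hy : c y ∈ K) :
    (d : ℤ) + 1 ≤ (x - s) + (y - e) := by
  have hxy : c x ≠ c y := fun h => by
    have := hc.eq_of_lt_add h (by omega) (by omega)
    omega
  have hes : c e ≠ c s := fun h => by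
    have := hc.eq_of_lt_add h (by omega) (by omega)
    omega
  obtain ⟨q, hq, hlen, hsupp⟩ := hc.exists_isPath_chord hsx hxe hey hys (hK hx hy hxy)
  have := hT he hs hes q hq hsupp
  omega

theorem add_one_le_of_chord_reverse {y s w e : ℤ} (hys : y < s) (hsw : s ≤ w) (hwe : w < e)
    (hey : e ≤ y + n) (hs : c s ∈ T) (he : c e ∈ T) (hy : c y ∈ K) (hw : c w ∈ K) :
    (d : ℤ) + 1 ≤ (s - y) + (e - w) := by
  have hT' : DetourBound G (Set.range fun k => c (-k)) T n d := by
    rwa [← Function.comp_def, neg_surjective.range_comp]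
  have := hc.neg.add_one_le_of_chord hT' hK (s := -e) (x := -w) (e := -s) (y := -y) (by omega)
    (by omega) (by omega) (by omega) (by simpa) (by simpa) (by simpa) (by simpa)
  omega

end DetourBound

end IsCyclicParam

section Missed

variable {V : Type*} [DecidableEq V]

/-- The vertices outside `K` met by `c` strictly between the positions `a` and `b`: what a clique
`K` misses of a segment of the cycle. -/
noncomputable def missed (c : ℤ → V) (K : Finset V) (a b : ℤ) : Finset V :=
  {k ∈ Finset.Ioo a b | c k ∉ K}.image c

theorem mem_missed {c : ℤ → V} {K : Finset V} {a b : ℤ} {v : V} :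
    v ∈ missed c K a b ↔ v ∉ K ∧ ∃ k, a < k ∧ k < b ∧ c k = v := by
  simp only [missed, Finset.mem_image, Finset.mem_filter, Finset.mem_Ioo]
  constructor
  · rintro ⟨k, ⟨⟨hak, hkb⟩, hkK⟩, rfl⟩
    exact ⟨hkK, k, hak, hkb, rfl⟩
  · rintro ⟨hv, k, hak, hkb, rfl⟩
    exact ⟨k, ⟨⟨hak, hkb⟩, hv⟩, rfl⟩

namespace IsCyclicParam

variable {G : SimpleGraph V} {n : ℕ} {c : ℤ → V} (hc : IsCyclicParam G n c) {K : Finset V}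
include hc

theorem disjoint_missed {s s' e e' : ℤ} (hse : s' ≤ e) (hes : e' ≤ s + n) :
    Disjoint (missed c K s s') (missed c K e e') := by
  rw [Finset.disjoint_left]
  intro v hv hv'
  obtain ⟨-, k, hsk, hks, rfl⟩ := mem_missed.1 hv
  obtain ⟨-, l, hel, hle, hlk⟩ := mem_missed.1 hv'
  have := hc.eq_of_lt_add hlk (by omega) (by omega)
  omega

theorem card_missed_add_card_filter_mem {a b : ℤ} (hab : a < b) (hba : b ≤ a + n) :
    ((missed c K a b).card : ℤ) + Finset.card {k ∈ Finset.Ioo a b | c k ∈ K} = b - a - 1 := by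
  have hinj : Set.InjOn c ({k ∈ Finset.Ioo a b | c k ∉ K} : Finset ℤ) :=
    (hc.injOn_Ioo hba).mono fun k hk => Finset.mem_Ioo.1 (Finset.mem_filter.1 hk).1
  have hsplit := Finset.card_filter_add_card_filter_not (s := Finset.Ioo a b) fun k => c k ∈ K
  rw [missed, Finset.card_image_of_injOn hinj]
  rw [Int.card_Ioo] at hsplit
  omega

theorem exists_extremal_mem_of_card_missed_lt {a b : ℤ} (hba : b ≤ a + n)
    (hlt : (missed c K a b).card < b - a - 1) :
    ∃ x y, a < x ∧ x ≤ y ∧ y < b ∧ c x ∈ K ∧ c y ∈ K ∧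
      (x - a - 1) + (b - y - 1) ≤ (missed c K a b).card := by
  have hcard := hc.card_missed_add_card_filter_mem (K := K) (a := a) (b := b) (by omega) hba
  set H : Finset ℤ := {k ∈ Finset.Ioo a b | c k ∈ K}
  have hne : H.Nonempty := Finset.card_pos.1 (by omega)
  have hxy : H.min' hne ≤ H.max' hne := H.min'_le_max' hne
  have hHcard : H.card ≤ (H.max' hne + 1 - H.min' hne).toNat := by
    rw [← Int.card_Icc]
    exact Finset.card_le_card fun k hk => Finset.mem_Icc.2 ⟨H.min'_le k hk, H.le_max' k hk⟩
  obtain ⟨hx, hxK⟩ := Finset.mem_filter.1 (H.min'_mem hne)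
  obtain ⟨hy, hyK⟩ := Finset.mem_filter.1 (H.max'_mem hne)
  exact ⟨_, _, (Finset.mem_Ioo.1 hx).1, hxy, (Finset.mem_Ioo.1 hy).2, hxK, hyK, by omega⟩

theorem le_card_missed_or_le_card_missed {T : Set V} {d : ℕ}
    (hT : DetourBound G (Set.range c) T n d) (hK : G.IsClique (K : Set V)) {s s' e e' : ℤ}
    (hss : s < s') (hse : s' ≤ e) (hee : e < e') (hes : e' ≤ s + n)
    (hs : c s ∈ T) (hs' : c s' ∈ T) (he : c e ∈ T) (he' : c e' ∈ T) :
    d - 1 ≤ (missed c K s s').card ∨ d - 1 ≤ (missed c K e e').card := by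
  by_contra! ⟨hlt, hlt'⟩
  have hlen := hc.add_le_of_detourBound hT hss (by omega) hs hs'
  have hlen' := hc.add_le_of_detourBound hT hee (by omega) he he'
  obtain ⟨x, y, hsx, hxy, hys, hx, hy, hmissed⟩ :=
    hc.exists_extremal_mem_of_card_missed_lt (K := K) (a := s) (b := s') (by omega) (by omega)
  obtain ⟨z, w, hez, hzw, hwe, hz, hw, hmissed'⟩ :=
    hc.exists_extremal_mem_of_card_missed_lt (K := K) (a := e) (b := e') (by omega) (by omega)
  have hfwd := hc.add_one_le_of_chord hT hK hsx (by omega) hez (by omega) hs he hx hz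
  have hbwd := hc.add_one_le_of_chord_reverse hT hK hys (by omega) hwe (by omega) hs' he' hy hw
  omega

theorem card_add_sum_card_missed_le (hKc : (K : Set V) ⊆ Set.range c) {S : Finset ℤ}
    {next : ℤ → ℤ}
    (hdisj : (S : Set ℤ).PairwiseDisjoint fun s => missed c K s (next s)) :
    K.card + ∑ s ∈ S, (missed c K s (next s)).card ≤ n := by
  let C : Finset V := (Finset.Ico (0 : ℤ) n).image c
  have mem_C {v : V} (hv : v ∈ Set.range c) : v ∈ C := Finset.mem_image.2 (hc.exists_mem_Ico hv)
  have hdisjK : Disjoint K (S.biUnion fun s => missed c K s (next s)) := by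
    rw [Finset.disjoint_biUnion_right]
    exact fun s _ => Finset.disjoint_right.2 fun v hv => (mem_missed.1 hv).1
  have hsub : K ∪ S.biUnion (fun s => missed c K s (next s)) ⊆ C := by
    refine Finset.union_subset (fun v hv => mem_C (hKc hv)) (Finset.biUnion_subset.2 ?_)
    intro s _ v hv
    obtain ⟨-, k, -, -, rfl⟩ := mem_missed.1 hv
    exact mem_C ⟨k, rfl⟩
  calc K.card + ∑ s ∈ S, (missed c K s (next s)).card
      = (K ∪ S.biUnion fun s => missed c K s (next s)).card := by
        rw [Finset.card_union_of_disjoint hdisjK, Finset.card_biUnion hdisj]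
    _ ≤ C.card := Finset.card_le_card hsub
    _ ≤ n := by simpa using Finset.card_image_le (s := Finset.Ico (0 : ℤ) n) (f := c)

end IsCyclicParam

end Missed

theorem card_sub_one_mul_le_sum_of_pairwise_or {ι : Type*} {S : Finset ι} {f : ι → ℕ} {a : ℕ}
    (h : (S : Set ι).Pairwise fun i j => a ≤ f i ∨ a ≤ f j) :
    (S.card - 1) * a ≤ ∑ i ∈ S, f i := by
  classical
  by_cases hall : ∀ i ∈ S, a ≤ f i
  · calc (S.card - 1) * a ≤ S.card * a := by gcongr; omega
      _ ≤ ∑ i ∈ S, f i := S.card_nsmul_le_sum f a hall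
  · push Not at hall
    obtain ⟨i₀, hi₀, hlt⟩ := hall
    have hrest : ∀ i ∈ S.erase i₀, a ≤ f i := fun i hi =>
      (h (Finset.mem_of_mem_erase hi) hi₀ (Finset.ne_of_mem_erase hi)).resolve_right hlt.not_ge
    calc (S.card - 1) * a = (S.erase i₀).card * a := by rw [Finset.card_erase_of_mem hi₀]
      _ ≤ ∑ i ∈ S.erase i₀, f i := Finset.card_nsmul_le_sum _ f a hrest
      _ ≤ ∑ i ∈ S, f i := Finset.sum_le_sum_of_subset (Finset.erase_subset _ _)

theorem IsCyclicParam.card_clique_add_le {V : Type*} {G : SimpleGraph V} {n d : ℕ} {c : ℤ → V}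
    (hc : IsCyclicParam G n c) {T K : Finset V} (hTc : (T : Set V) ⊆ Set.range c)
    (hT : DetourBound G (Set.range c) T n d) (hKc : (K : Set V) ⊆ Set.range c)
    (hK : G.IsClique (K : Set V)) : K.card + (T.card - 1) * (d - 1) ≤ n := by
  classical
  choose! next hlt hmem hleast using fun s (hs : c s ∈ (T : Set V)) => hc.exists_next_mem hs
  let S : Finset ℤ := {k ∈ Finset.Ico (0 : ℤ) n | c k ∈ T}
  have mem_T {s : ℤ} (hs : s ∈ S) : c s ∈ (T : Set V) := (Finset.mem_filter.1 hs).2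
  have hTS : T.card ≤ S.card := by
    refine (Finset.card_le_card fun v hv => ?_).trans (Finset.card_image_le (f := c))
    obtain ⟨k, hk, rfl⟩ := hc.exists_mem_Ico (hTc hv)
    exact Finset.mem_image_of_mem c (Finset.mem_filter.2 ⟨hk, hv⟩)
  have next_le {s e : ℤ} (hs : s ∈ S) (he : e ∈ S) (hse : s < e) :
      next s ≤ e ∧ next e ≤ s + n := by
    have hs0 := Finset.mem_Ico.1 (Finset.mem_filter.1 hs).1
    have he0 := Finset.mem_Ico.1 (Finset.mem_filter.1 he).1
    exact ⟨hleast s (mem_T hs) e hse (mem_T he), hleast e (mem_T he) (s + n) (by omega)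
      (by rw [hc.map_add_period]; exact mem_T hs)⟩
  have segments {s e : ℤ} (hs : s ∈ S) (he : e ∈ S) (hse : s < e) :
      Disjoint (missed c K s (next s)) (missed c K e (next e)) ∧
        (d - 1 ≤ (missed c K s (next s)).card ∨ d - 1 ≤ (missed c K e (next e)).card) := by
    obtain ⟨hle, hle'⟩ := next_le hs he hse
    exact ⟨hc.disjoint_missed hle hle', hc.le_card_missed_or_le_card_missed hT hK
      (hlt s (mem_T hs)) hle (hlt e (mem_T he)) hle' (mem_T hs) (hmem s (mem_T hs)) (mem_T he)
      (hmem e (mem_T he))⟩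
  have hdisj : (S : Set ℤ).PairwiseDisjoint fun s => missed c K s (next s) := fun s hs e he hne =>
    hne.lt_or_gt.elim (fun h => (segments hs he h).1) fun h => (segments he hs h).1.symm
  have hsum : (S.card - 1) * (d - 1) ≤ ∑ s ∈ S, (missed c K s (next s)).card :=
    card_sub_one_mul_le_sum_of_pairwise_or fun s hs e he hne =>
      hne.lt_or_gt.elim (fun h => (segments hs he h).2) fun h => (segments he hs h).2.symm
  calc K.card + (T.card - 1) * (d - 1) ≤ K.card + (S.card - 1) * (d - 1) := by gcongr
    _ ≤ K.card + ∑ s ∈ S, (missed c K s (next s)).card := by gcongr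
    _ ≤ n := hc.card_add_sum_card_missed_le hKc hdisj

theorem stmt14_general {V : Type*} {G : SimpleGraph V} {v₀ : V} {p : G.Walk v₀ v₀}
    (hp : IsLocallyMaximal G p) {R : Set V} (hR : Disjoint R {x | x ∈ p.support}) {ι : Type*}
    [Fintype ι] [Nonempty ι] {u : ι → V} (hinj : Function.Injective u)
    (hup : ∀ i, u i ∈ p.support) {d : ℕ} (hd : 2 ≤ d)
    (hpaths : ∀ i j, i ≠ j → ∃ P : G.Walk (u i) (u j), P.IsPath ∧ d ≤ P.length ∧
      ∀ w ∈ P.support, w ≠ u i → w ≠ u j → w ∈ R)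
    {K : Finset V} (hKp : (K : Set V) ⊆ {x | x ∈ p.support}) (hK : G.IsClique (K : Set V)) :
    (K.card : ℤ) ≤ (p.length : ℤ) - (d - 1 : ℤ) * (Fintype.card ι - 1 : ℤ) := by
  obtain ⟨c, hc, hrange⟩ := exists_isCyclicParam_of_isCycle hp.1
  let T : Finset V := Finset.univ.map ⟨u, hinj⟩
  have hTu : (T : Set V) = Set.range u := by simp [T]
  have hTc : (T : Set V) ⊆ Set.range c := hTu ▸ hrange ▸ Set.range_subset_iff.2 hup
  have hTd : DetourBound G (Set.range c) T p.length d := by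
    rw [hTu, hrange]
    refine hp.detourBound hd ?_
    rintro _ ⟨i, rfl⟩ _ ⟨j, rfl⟩ hij
    obtain ⟨P, hP, hdP, hPR⟩ := hpaths i j (ne_of_apply_ne u hij)
    exact ⟨P, hP, hdP, fun w hw hwi hwj => Set.disjoint_left.1 hR (hPR w hw hwi hwj)⟩
  have hbound : K.card + (Fintype.card ι - 1) * (d - 1) ≤ p.length := by
    simpa [T] using hc.card_clique_add_le hTc hTd (hrange ▸ hKp) hK
  have hd' : 1 ≤ d := one_le_two.trans hd
  have hι : 1 ≤ Fintype.card ι := Fintype.card_pos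
  zify [hd', hι] at hbound
  linarith

/-- If `C` is a locally maximal cycle in the 2-connected graph `G`, `R` a component of
`G - C`, `T` a strong attachment of `R` to `C` of size `t`, and every pair of vertices of
`T` is joined by a path of length `≥ d ≥ 2` with internal vertices in `R`, then the clique
number of `G[V(C)]` is at most `|C| - (d-1)(t-1)`. -/
theorem stmt14 {V : Type*} [Fintype V] (G : SimpleGraph V) (hG : TwoConnected G)
    (v0 : V) (p : G.Walk v0 v0) (hC : IsLocallyMaximal G p) (R : Set V)
    (hR : IsCompOutside G {x | x ∈ p.support} R)
    (t : ℕ) [NeZero t] (u : Fin t → V) (hinj : Function.Injective u)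
    (hT : ∀ i : Fin t, u i ∈ p.support ∧ ∃ r ∈ R, G.Adj (u i) r)
    (hSA : IsStrongAttachment G p R u)
    (d : ℕ) (hd2 : 2 ≤ d)
    (hpaths : ∀ i j : Fin t, i ≠ j →
      ∃ P : G.Walk (u i) (u j), P.IsPath ∧ d ≤ P.length ∧
        ∀ w ∈ P.support, w ≠ u i → w ≠ u j → w ∈ R) :
    ∀ K : Finset V, (K : Set V) ⊆ {x | x ∈ p.support} → G.IsClique (K : Set V) →
      (K.card : ℤ) ≤ (p.length : ℤ) - (d - 1 : ℤ) * (t - 1 : ℤ) := by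
  intro K hKp hK
  simpa using stmt14_general hC hR.2.1 hinj (fun i => (hT i).1) hd2 hpaths hKp hK
end
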